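/- arXiv:2107.02231 — 5 statements merged into one kernel-verified Lean document; each statement's English description precedes it below -/
import Mathlib

section
/- Let X be a finite set of distinct points in P^m × P^n with X = X_1 × X_2. Then X is ACM, I_X = I_{X_1}S + I_{X_2}S, and HF_X(i,j) = HF_{X_1}(i) · HF_{X_2}(j) for all (i,j) ∈ Z^2. -/
/- Common setup: finite sets of points in the multiprojective space
   `P^m x P^n` over a field `K` of characteristic zero, their bihomogeneous
   vanishing ideals, bigraded Hilbert functions, Kähler differents,
   separators, Cayley-Bacharach property and complete intersections. -/

open MvPolynomial

set_option maxHeartbeats 1000000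
set_option synthInstance.maxHeartbeats 400000

noncomputable section

namespace MultiProjPoints

variable (K : Type) [Field K] [CharZero K] [DecidableEq K]

/-- The bigraded coordinate ring `S = K[X_0,…,X_m,Y_0,…,Y_n]` of `P^m × P^n`. -/
abbrev BiRing (m n : ℕ) : Type := MvPolynomial (Fin (m+1) ⊕ Fin (n+1)) K

/-- The weights giving the bigrading: `deg X_i = (1,0)`, `deg Y_j = (0,1)`. -/
def biwt (m n : ℕ) : (Fin (m+1) ⊕ Fin (n+1)) → ℤ × ℤ :=
  Sum.elim (fun _ => ((1 : ℤ), (0 : ℤ))) (fun _ => ((0 : ℤ), (1 : ℤ)))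

variable {m n : ℕ}

/-- A (representative of a) point of `P^m × P^n`. -/
abbrev BiPt (m n : ℕ) : Type := (Fin (m+1) → K) × (Fin (n+1) → K)

/-- `F` is bihomogeneous of degree `d`. -/
def IsBihom (F : BiRing K m n) (d : ℤ × ℤ) : Prop :=
  IsWeightedHomogeneous (biwt m n) F d

/-- Evaluation of a polynomial at (a representative of) a point. -/
def evalB (p : BiPt K m n) (F : BiRing K m n) : K :=
  eval (Sum.elim p.1 p.2) F

/-- A finset of representatives is a good configuration of points of
`P^m × P^n`: all representatives are nonzero, and proportional
representatives coincide (so distinct elements are distinct projective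
points, and images under the two projections behave correctly). -/
def GoodConfig (𝕏 : Finset (BiPt K m n)) : Prop :=
  (∀ p ∈ 𝕏, p.1 ≠ 0 ∧ p.2 ≠ 0) ∧
  (∀ p ∈ 𝕏, ∀ q ∈ 𝕏, (∃ c : K, c ≠ 0 ∧ p.1 = c • q.1) → p.1 = q.1) ∧
  (∀ p ∈ 𝕏, ∀ q ∈ 𝕏, (∃ c : K, c ≠ 0 ∧ p.2 = c • q.2) → p.2 = q.2)

/-- The bihomogeneous vanishing ideal `I_𝕏` of a set of points. -/
def vIdealB (𝕏 : Finset (BiPt K m n)) : Ideal (BiRing K m n) :=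
  Ideal.span {F | (∃ d, IsBihom K F d) ∧ ∀ p ∈ 𝕏, evalB K p F = 0}

/-- The bihomogeneous vanishing ideal of a single point. -/
def ptIdealB (p : BiPt K m n) : Ideal (BiRing K m n) :=
  Ideal.span {F | (∃ d, IsBihom K F d) ∧ evalB K p F = 0}

/-- The degree-`d` piece of `S/I`. -/
def degPieceB (I : Ideal (BiRing K m n)) (d : ℤ × ℤ) :
    Submodule K (BiRing K m n ⧸ I) :=
  (weightedHomogeneousSubmodule K (biwt m n) d).map
    (Ideal.Quotient.mkₐ K I).toLinearMap

/-- The Hilbert function of `S/I`. -/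
def HFI (I : Ideal (BiRing K m n)) (d : ℤ × ℤ) : ℕ :=
  Module.finrank K (degPieceB K I d)

/-- The Hilbert function of a set of points in `P^m × P^n`. -/
def HFB (𝕏 : Finset (BiPt K m n)) (d : ℤ × ℤ) : ℕ :=
  HFI K (vIdealB K 𝕏) d

/-- The Hilbert function of a (bihomogeneous) ideal `J` of `R_𝕏 = S/I`. -/
def HFIdealB (I : Ideal (BiRing K m n)) (J : Ideal (BiRing K m n ⧸ I))
    (d : ℤ × ℤ) : ℕ :=
  Module.finrank K ↥((Submodule.restrictScalars K J) ⊓ degPieceB K I d)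

/- ### Single projective space `P^N` -/

/-- The coordinate ring `K[X_0,…,X_N]` of `P^N`. -/
abbrev PRing (N : ℕ) : Type := MvPolynomial (Fin (N+1)) K

/-- The standard grading on `K[X_0,…,X_N]` (with values in `ℤ`). -/
def wt1 (N : ℕ) : Fin (N+1) → ℤ := fun _ => 1

/-- `F` is homogeneous of degree `d`. -/
def IsHom1 {N : ℕ} (F : PRing K N) (d : ℤ) : Prop :=
  IsWeightedHomogeneous (wt1 N) F d

/-- A good finite set of representatives of points in `P^N`. -/
def GoodSet {N : ℕ} (Y : Finset (Fin (N+1) → K)) : Prop :=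
  (∀ q ∈ Y, q ≠ 0) ∧
  (∀ p ∈ Y, ∀ q ∈ Y, (∃ c : K, c ≠ 0 ∧ p = c • q) → p = q)

/-- The homogeneous vanishing ideal of a set of points in `P^N`. -/
def vIdeal1 {N : ℕ} (Y : Finset (Fin (N+1) → K)) : Ideal (PRing K N) :=
  Ideal.span {F | (∃ d, IsHom1 K F d) ∧ ∀ q ∈ Y, eval q F = 0}

/-- The degree-`d` piece of `K[X_0,…,X_N]/I`. -/
def degPiece1 {N : ℕ} (I : Ideal (PRing K N)) (d : ℤ) :
    Submodule K (PRing K N ⧸ I) :=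
  (weightedHomogeneousSubmodule K (wt1 N) d).map
    (Ideal.Quotient.mkₐ K I).toLinearMap

/-- The Hilbert function of a set of points in `P^N`. -/
def HF1 {N : ℕ} (Y : Finset (Fin (N+1) → K)) (d : ℤ) : ℕ :=
  Module.finrank K (degPiece1 K (vIdeal1 K Y) d)

/-- The Hilbert function of a homogeneous ideal of `K[X_0,…,X_N]/I`. -/
def HFIdeal1 {N : ℕ} (I : Ideal (PRing K N)) (J : Ideal (PRing K N ⧸ I))
    (d : ℤ) : ℕ :=
  Module.finrank K ↥((Submodule.restrictScalars K J) ⊓ degPiece1 K I d)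

/-- The degree `deg_Y(q)` of a point `q` in `Y ⊆ P^N`: the minimal degree of
a homogeneous separator of `q` in `Y`. -/
def deg1 {N : ℕ} (Y : Finset (Fin (N+1) → K)) (q : Fin (N+1) → K) : ℕ :=
  sInf {d : ℕ | ∃ F : PRing K N, IsHom1 K F (d : ℤ) ∧ eval q F ≠ 0 ∧
    ∀ q' ∈ Y, q' ≠ q → eval q' F = 0}

/-- The regularity index of the Hilbert function of `Y ⊆ P^N`. -/
def regIndex1 {N : ℕ} (Y : Finset (Fin (N+1) → K)) : ℕ :=
  sInf {r : ℕ | ∀ i : ℕ, r ≤ i → HF1 K Y (i : ℤ) = Y.card}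

/-- `Y ⊆ P^N` is a Cayley-Bacharach scheme. -/
def IsCB1 {N : ℕ} (Y : Finset (Fin (N+1) → K)) : Prop :=
  ∀ q ∈ Y, deg1 K Y q = regIndex1 K Y

/- ### Kähler differents -/

/-- The variables `X_1,…,X_m,Y_1,…,Y_n` indexed by `Fin (m+n)`. -/
def bvar (m n : ℕ) (v : Fin (m+n)) : Fin (m+1) ⊕ Fin (n+1) :=
  if h : (v : ℕ) < m then Sum.inl ⟨(v : ℕ) + 1, by omega⟩
  else Sum.inr ⟨(v : ℕ) - m + 1, by have hv := v.isLt; omega⟩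

/-- The Kähler different of `R = S/I` w.r.t. a system of generators `F` of
`I`: the ideal generated by the `(m+n)×(m+n)`-minors of the Jacobian matrix
`(∂F_k/∂X_i, ∂F_k/∂Y_j)`. -/
def kdiffB (I : Ideal (BiRing K m n)) {r : ℕ} (F : Fin r → BiRing K m n) :
    Ideal (BiRing K m n ⧸ I) :=
  Ideal.span (Set.range fun ρ : Fin (m+n) → Fin r =>
    Ideal.Quotient.mk I (Matrix.det (Matrix.of fun u v : Fin (m+n) =>
      pderiv (bvar m n v) (F (ρ u)))))

/-- The Kähler different of `K[X_0,…,X_N]/I` w.r.t. a system of generators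
`F` of `I` (minors w.r.t. the variables `X_1,…,X_N`). -/
def kdiff1 {N : ℕ} (I : Ideal (PRing K N)) {r : ℕ} (F : Fin r → PRing K N) :
    Ideal (PRing K N ⧸ I) :=
  Ideal.span (Set.range fun ρ : Fin N → Fin r =>
    Ideal.Quotient.mk I (Matrix.det (Matrix.of fun u v : Fin N =>
      pderiv (Fin.succ v) (F (ρ u)))))

/-- The extension `ϑ_{𝕏₁} R_𝕏` to `R_𝕏 = S/I` of the Kähler different of
`𝕏₁ ⊆ P^m` computed from a system of generators `F` of `I_{𝕏₁}`. -/
def kdiffExtL (I : Ideal (BiRing K m n)) {r : ℕ} (F : Fin r → PRing K m) :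
    Ideal (BiRing K m n ⧸ I) :=
  Ideal.span (Set.range fun ρ : Fin m → Fin r =>
    Ideal.Quotient.mk I (rename Sum.inl (Matrix.det (Matrix.of fun u v : Fin m =>
      pderiv (Fin.succ v) (F (ρ u))))))

/-- The extension `ϑ_{𝕏₂} R_𝕏` to `R_𝕏 = S/I` of the Kähler different of
`𝕏₂ ⊆ P^n` computed from a system of generators `G` of `I_{𝕏₂}`. -/
def kdiffExtR (I : Ideal (BiRing K m n)) {r : ℕ} (G : Fin r → PRing K n) :
    Ideal (BiRing K m n ⧸ I) :=
  Ideal.span (Set.range fun ρ : Fin n → Fin r =>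
    Ideal.Quotient.mk I (rename Sum.inr (Matrix.det (Matrix.of fun u v : Fin n =>
      pderiv (Fin.succ v) (G (ρ u))))))

/- ### Regular sequences, ACM, complete intersections -/

/-- `a, b` form a regular sequence. -/
def RegPair {A : Type*} [CommRing A] (a b : A) : Prop :=
  (∀ z : A, a * z = 0 → z = 0) ∧
  (∀ z : A, b * z ∈ Ideal.span {a} → z ∈ Ideal.span {a})

/-- The image `x₀` of `X_0` in `S/I`. -/
def x0B (I : Ideal (BiRing K m n)) : BiRing K m n ⧸ I :=
  Ideal.Quotient.mk I (MvPolynomial.X (Sum.inl 0))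

/-- The image `y₀` of `Y_0` in `S/I`. -/
def y0B (I : Ideal (BiRing K m n)) : BiRing K m n ⧸ I :=
  Ideal.Quotient.mk I (MvPolynomial.X (Sum.inr 0))

/-- The standing assumption for ACM sets of points: (after a change of
coordinates) `x₀, y₀` form a regular sequence in `R_𝕏`. -/
def ACMxy (𝕏 : Finset (BiPt K m n)) : Prop :=
  RegPair (x0B K (vIdealB K 𝕏)) (y0B K (vIdealB K 𝕏))

/-- `𝕏` is arithmetically Cohen-Macaulay: some bihomogeneous linear forms
`ℓ` of degree `(1,0)` and `ℓ'` of degree `(0,1)` give a regular sequence in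
`R_𝕏` (for points this is equivalent to `depth R_𝕏 = 2`). -/
def IsACM (𝕏 : Finset (BiPt K m n)) : Prop :=
  ∃ l l' : BiRing K m n, IsBihom K l (1, 0) ∧ IsBihom K l' (0, 1) ∧
    RegPair (Ideal.Quotient.mk (vIdealB K 𝕏) l) (Ideal.Quotient.mk (vIdealB K 𝕏) l')

/-- A regular sequence in a commutative ring, given as a list:
each entry is a non-zerodivisor modulo the preceding ones, and the list
generates a proper ideal. -/
def IsRegSeq {A : Type*} [CommRing A] (l : List A) : Prop :=
  (∀ (i : ℕ) (h : i < l.length), ∀ z : A,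
      l.get ⟨i, h⟩ * z ∈ Ideal.span {x | x ∈ l.take i} →
      z ∈ Ideal.span {x | x ∈ l.take i}) ∧
  Ideal.span {x | x ∈ l} ≠ ⊤

/-- `𝕏` is a complete intersection of type `(d_1,…,d_m,d'_1,…,d'_n)`. -/
def IsCIB (𝕏 : Finset (BiPt K m n)) (d : Fin m → ℕ) (d' : Fin n → ℕ) : Prop :=
  ∃ (F : Fin m → BiRing K m n) (G : Fin n → BiRing K m n),
    (∀ i, IsBihom K (F i) ((d i : ℤ), 0)) ∧
    (∀ j, IsBihom K (G j) (0, (d' j : ℤ))) ∧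
    IsRegSeq (List.ofFn F ++ List.ofFn G) ∧
    Ideal.span (Set.range F ∪ Set.range G) = vIdealB K 𝕏

/-- `Y ⊆ P^N` is a complete intersection of type `(d_1,…,d_N)`. -/
def IsCI1 {N : ℕ} (Y : Finset (Fin (N+1) → K)) (d : Fin N → ℕ) : Prop :=
  ∃ F : Fin N → PRing K N,
    (∀ i, IsHom1 K (F i) (d i : ℤ)) ∧
    IsRegSeq (List.ofFn F) ∧
    Ideal.span (Set.range F) = vIdeal1 K Y

/- ### Separators and the Cayley-Bacharach property -/

/-- `F` is a separator of `p` in `𝕏`. -/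
def IsSepB (𝕏 : Finset (BiPt K m n)) (p : BiPt K m n) (F : BiRing K m n) : Prop :=
  evalB K p F ≠ 0 ∧ ∀ q ∈ 𝕏, q ≠ p → evalB K q F = 0

/-- The set of degrees of bihomogeneous separators of `p` in `𝕏`. -/
def sepDegsB (𝕏 : Finset (BiPt K m n)) (p : BiPt K m n) : Set (ℤ × ℤ) :=
  {d | ∃ F, IsBihom K F d ∧ IsSepB K 𝕏 p F}

/-- `deg_𝕏(p)`: the set of degrees of minimal separators of `p` in `𝕏`
(mimimality w.r.t. the componentwise order). -/
def minSepDegsB (𝕏 : Finset (BiPt K m n)) (p : BiPt K m n) : Set (ℤ × ℤ) :=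
  {d ∈ sepDegsB K 𝕏 p | ∀ d' ∈ sepDegsB K 𝕏 p, ¬ d' < d}

/-- `𝕏` has the Cayley-Bacharach property: the Hilbert function of
`𝕏 \ {p}` is independent of the choice of `p ∈ 𝕏`. -/
def HasCB (𝕏 : Finset (BiPt K m n)) : Prop :=
  ∀ p ∈ 𝕏, ∀ q ∈ 𝕏, ∀ d : ℤ × ℤ, HFB K (𝕏.erase p) d = HFB K (𝕏.erase q) d

/- ### Star property and fibres -/

/-- The `(⋆)`-property. -/
def StarProp (𝕏 : Finset (BiPt K m n)) : Prop :=
  ∀ p ∈ 𝕏, ∀ q ∈ 𝕏, ((p.1, q.2) ∈ 𝕏 ∨ (q.1, p.2) ∈ 𝕏)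

/-- `V_j = π₁(π₂⁻¹(q'_j) ∩ 𝕏)` for `q'_j = p.2`. -/
def Vset (𝕏 : Finset (BiPt K m n)) (p : BiPt K m n) : Finset (Fin (m+1) → K) :=
  (𝕏.filter fun q => q.2 = p.2).image Prod.fst

/-- `W_i = π₂(π₁⁻¹(q_i) ∩ 𝕏)` for `q_i = p.1`. -/
def Wset (𝕏 : Finset (BiPt K m n)) (p : BiPt K m n) : Finset (Fin (n+1) → K) :=
  (𝕏.filter fun q => q.1 = p.1).image Prod.snd

end MultiProjPoints

namespace MultiProjPoints

section Helpers

variable (K : Type) [Field K] [CharZero K] [DecidableEq K] {m n N : ℕ}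

/-- The embedding of the first coordinate ring. -/
abbrev iL (m n : ℕ) : PRing K m →ₐ[K] BiRing K m n := rename Sum.inl

/-- The embedding of the second coordinate ring. -/
abbrev iR (m n : ℕ) : PRing K n →ₐ[K] BiRing K m n := rename Sum.inr

lemma exp_split {α β : Type*} (e : α ⊕ β →₀ ℕ) : ∃ (a : α →₀ ℕ) (b : β →₀ ℕ),
    a = (Finsupp.sumFinsuppAddEquivProdFinsupp e).1 ∧
    b = (Finsupp.sumFinsuppAddEquivProdFinsupp e).2 ∧
    e = a.mapDomain Sum.inl + b.mapDomain Sum.inr := by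
  refine ⟨_, _, rfl, rfl, ?_⟩
  ext (x | x)
  · rw [Finsupp.add_apply, Finsupp.mapDomain_apply Sum.inl_injective,
      Finsupp.mapDomain_of_notMem_range _ _ (by simp)]
    simp
  · rw [Finsupp.add_apply, Finsupp.mapDomain_apply Sum.inr_injective,
      Finsupp.mapDomain_of_notMem_range _ _ (by simp)]
    simp

lemma exp_join {α β : Type*} (a : α →₀ ℕ) (b : β →₀ ℕ) :
    Finsupp.sumFinsuppAddEquivProdFinsupp (a.mapDomain Sum.inl + b.mapDomain Sum.inr) = (a, b) := by
  ext x
  · simp only [Finsupp.fst_sumFinsuppAddEquivProdFinsupp]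
    rw [Finsupp.add_apply, Finsupp.mapDomain_apply Sum.inl_injective,
      Finsupp.mapDomain_of_notMem_range _ _ (by simp), add_zero]
  · simp only [Finsupp.snd_sumFinsuppAddEquivProdFinsupp]
    rw [Finsupp.add_apply, Finsupp.mapDomain_apply Sum.inr_injective,
      Finsupp.mapDomain_of_notMem_range _ _ (by simp), zero_add]

lemma mono_join (a : Fin (m+1) →₀ ℕ) (b : Fin (n+1) →₀ ℕ) (r s : K) :
    iL K m n (monomial a r) * iR K m n (monomial b s) =
      monomial (a.mapDomain Sum.inl + b.mapDomain Sum.inr) (r * s) := by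
  rw [rename_monomial, rename_monomial, monomial_mul]

lemma weight_join (a : Fin (m+1) →₀ ℕ) (b : Fin (n+1) →₀ ℕ) :
    Finsupp.weight (biwt m n) (a.mapDomain Sum.inl + b.mapDomain Sum.inr) =
      (Finsupp.weight (wt1 m) a, Finsupp.weight (wt1 n) b) := by
  rw [map_add, Finsupp.weight_apply, Finsupp.weight_apply, Finsupp.weight_apply,
    Finsupp.weight_apply, Finsupp.sum_mapDomain_index, Finsupp.sum_mapDomain_index]
  · simp only [Finsupp.sum, biwt, wt1, Sum.elim_inl, Sum.elim_inr]
    ext <;> simp [Prod.fst_sum, Prod.snd_sum]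
  all_goals intros
  all_goals simp [add_smul]

lemma bi_ind {P : BiRing K m n → Prop} (hadd : ∀ p q, P p → P q → P (p + q))
    (h : ∀ a b, P (iL K m n a * iR K m n b)) (z : BiRing K m n) : P z := by
  refine MvPolynomial.induction_on' z (fun e r => ?_) hadd
  obtain ⟨a, b, -, -, rfl⟩ := exp_split e
  have := h (monomial a r) (monomial b 1)
  rwa [mono_join, mul_one] at this

lemma bihom_ind {P : BiRing K m n → Prop} (i j : ℤ) (h0 : P 0)
    (hadd : ∀ p q, P p → P q → P (p + q))
    (h : ∀ a b, IsHom1 K a i → IsHom1 K b j → P (iL K m n a * iR K m n b)) (z : BiRing K m n)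
    (hz : IsBihom K z (i, j)) : P z := by
  refine IsWeightedHomogeneous.induction_on (motive := fun p _ => P p) h0
    (fun p q _ _ hp hq => hadd p q hp hq) (fun e r he => ?_) hz
  obtain ⟨a, b, -, -, rfl⟩ := exp_split e
  rw [weight_join, Prod.mk.injEq] at he
  have := h (monomial a r) (monomial b 1) (isWeightedHomogeneous_monomial _ _ _ he.1)
    (isWeightedHomogeneous_monomial _ _ _ he.2)
  rwa [mono_join, mul_one] at this

lemma bihom_mul {a : PRing K m} {b : PRing K n} {i j : ℤ} (ha : IsHom1 K a i) (hb : IsHom1 K b j) :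
    IsBihom K (iL K m n a * iR K m n b) (i, j) := by
  refine IsWeightedHomogeneous.induction_on
    (motive := fun a _ => IsBihom K (iL K m n a * iR K m n b) (i, j)) ?_ ?_ ?_ ha
  · rw [map_zero, zero_mul]; exact isWeightedHomogeneous_zero K _ _
  · intro p q _ _ hp hq
    rw [map_add, add_mul]
    exact hp.add hq
  · intro e r he
    refine IsWeightedHomogeneous.induction_on
      (motive := fun b _ => IsBihom K (iL K m n (monomial e r) * iR K m n b) (i, j)) ?_ ?_ ?_ hb
    · rw [map_zero, mul_zero]; exact isWeightedHomogeneous_zero K _ _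
    · intro p q _ _ hp hq
      rw [map_add, mul_add]
      exact hp.add hq
    · intro e' r' he'
      rw [mono_join]
      apply isWeightedHomogeneous_monomial
      rw [weight_join, he, he']

lemma eval_iL (p : BiPt K m n) (a : PRing K m) : evalB K p (iL K m n a) = eval p.1 a := by
  simp only [evalB, eval_rename]; rfl

lemma eval_iR (p : BiPt K m n) (a : PRing K n) : evalB K p (iR K m n a) = eval p.2 a := by
  simp only [evalB, eval_rename]; rfl

lemma vIdeal1_eval {Y : Finset (Fin (N+1) → K)} {f : PRing K N} (hf : f ∈ vIdeal1 K Y)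
    {q : Fin (N+1) → K} (hq : q ∈ Y) : eval q f = 0 := by
  have : vIdeal1 K Y ≤ RingHom.ker (eval q) :=
    Ideal.span_le.2 fun F hF => hF.2 q hq
  exact this hf

lemma vIdealB_eval {Y : Finset (BiPt K m n)} {f : BiRing K m n} (hf : f ∈ vIdealB K Y)
    {q : BiPt K m n} (hq : q ∈ Y) : evalB K q f = 0 := by
  have : vIdealB K Y ≤ RingHom.ker (eval (Sum.elim q.1 q.2)) :=
    Ideal.span_le.2 fun F hF => hF.2 q hq
  exact this hf

/-- Bilinear maps on `S`. -/
lemma exists_T (σ : PRing K m →ₗ[K] PRing K m) (τ : PRing K n →ₗ[K] PRing K n) :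
    ∃ T : BiRing K m n →ₗ[K] BiRing K m n,
      ∀ a b, T (iL K m n a * iR K m n b) = iL K m n (σ a) * iR K m n (τ b) := by
  let T : BiRing K m n →ₗ[K] BiRing K m n := (basisMonomials _ K).constr K fun e =>
    iL K m n (σ (monomial (Finsupp.sumFinsuppAddEquivProdFinsupp e).1 1)) *
    iR K m n (τ (monomial (Finsupp.sumFinsuppAddEquivProdFinsupp e).2 1))
  have hT : ∀ e, T (monomial e 1) =
    iL K m n (σ (monomial (Finsupp.sumFinsuppAddEquivProdFinsupp e).1 1)) *
    iR K m n (τ (monomial (Finsupp.sumFinsuppAddEquivProdFinsupp e).2 1)) := by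
    intro e
    have := (basisMonomials _ K).constr_basis K (fun e =>
      iL K m n (σ (monomial (Finsupp.sumFinsuppAddEquivProdFinsupp e).1 1)) *
      iR K m n (τ (monomial (Finsupp.sumFinsuppAddEquivProdFinsupp e).2 1))) e
    rwa [coe_basisMonomials] at this
  refine ⟨T, fun a b => ?_⟩
  induction a using MvPolynomial.induction_on' with
  | add p q hp hq => simp only [map_add, add_mul, hp, hq]
  | monomial e r =>
    induction b using MvPolynomial.induction_on' with
    | add p q hp hq => simp only [map_add, mul_add, hp, hq]
    | monomial e' r' =>
      have h1 : ∀ {σ : Type} (u : σ →₀ ℕ) (r : K), monomial u r = r • monomial u (1 : K) := by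
        intro σ u r; rw [smul_monomial, smul_eq_mul, mul_one]
      rw [mono_join, h1 _ (r * r'), map_smul, hT, exp_join, h1 e r, h1 e' r']
      simp only [map_smul, smul_mul_smul_comm]

lemma mul_lin {Y : Finset (Fin (N+1) → K)} {l : PRing K N} (hl : IsHom1 K l 1)
    (hlq : ∀ q ∈ Y, eval q l ≠ 0) {f : PRing K N} (hf : l * f ∈ vIdeal1 K Y) :
    f ∈ vIdeal1 K Y := by
  letI := weightedGradedAlgebra K (wt1 N)
  have hhom : (vIdeal1 K Y).IsHomogeneous (weightedHomogeneousSubmodule K (wt1 N)) :=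
    Ideal.homogeneous_span _ _ fun F hF => hF.1
  rw [hhom.mem_iff] at hf ⊢
  intro d
  have h := hf (1 + d)
  rw [DirectSum.coe_decompose_mul_add_of_left_mem _ hl] at h
  refine Ideal.subset_span ⟨⟨d, (DirectSum.decompose (weightedHomogeneousSubmodule K (wt1 N)) f d).2⟩, fun q hq => ?_⟩
  have := vIdeal1_eval K h hq
  rw [map_mul] at this
  exact (mul_eq_zero.1 this).resolve_left (hlq q hq)

lemma exists_lin {Y : Finset (Fin (N+1) → K)} (hY : ∀ q ∈ Y, q ≠ 0) :
    ∃ l : PRing K N, IsHom1 K l 1 ∧ ∀ q ∈ Y, eval q l ≠ 0 := by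
  have hP : (∏ q ∈ Y, ∑ i, C (q i) * X i : PRing K N) ≠ 0 := by
    refine Finset.prod_ne_zero_iff.2 fun q hq h => hY q hq ?_
    ext i
    have := congrArg (eval (Pi.single i 1)) h
    simpa [Pi.single_apply] using this
  obtain ⟨c, hc⟩ : ∃ c, eval c (∏ q ∈ Y, ∑ i, C (q i) * X i : PRing K N) ≠ 0 := by
    by_contra! h
    exact hP (MvPolynomial.funext fun c => by rw [h c, map_zero])
  refine ⟨∑ i, C (c i) * X i, ?_, fun q hq => ?_⟩
  · exact IsWeightedHomogeneous.sum _ _ _ fun i _ =>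
      (isWeightedHomogeneous_X K (wt1 N) i).C_mul (c i)
  · rw [map_prod] at hc
    have := Finset.prod_ne_zero_iff.1 hc q hq
    simpa [mul_comm] using this

/-- A linear left inverse of multiplication by a general linear form. -/
lemma exists_tau {Y : Finset (Fin (N+1) → K)} {l : PRing K N} (hl : IsHom1 K l 1)
    (hlq : ∀ q ∈ Y, eval q l ≠ 0) : ∃ τ : PRing K N →ₗ[K] PRing K N,
      (∀ f ∈ vIdeal1 K Y, τ f ∈ vIdeal1 K Y) ∧ ∀ f, τ (l * f) - f ∈ vIdeal1 K Y := by
  let I := vIdeal1 K Y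
  let π : PRing K N →ₗ[K] PRing K N ⧸ I := (Ideal.Quotient.mkₐ K I).toLinearMap
  have hπ : ∀ f, π f = Ideal.Quotient.mk I f := fun f => rfl
  let μ : (PRing K N ⧸ I) →ₗ[K] (PRing K N ⧸ I) := LinearMap.mulLeft K (Ideal.Quotient.mk I l)
  have hμ : LinearMap.ker μ = ⊥ := by
    refine LinearMap.ker_eq_bot'.2 fun z hz => ?_
    obtain ⟨f, rfl⟩ := Ideal.Quotient.mk_surjective z
    have hz : Ideal.Quotient.mk I l * Ideal.Quotient.mk I f = 0 := hz
    rw [← map_mul, Ideal.Quotient.eq_zero_iff_mem] at hz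
    exact Ideal.Quotient.eq_zero_iff_mem.2 (mul_lin K hl hlq hz)
  obtain ⟨ρ, hρ⟩ := LinearMap.exists_leftInverse_of_injective μ hμ
  obtain ⟨s, hs⟩ := LinearMap.exists_rightInverse_of_surjective π
    (LinearMap.range_eq_top.2 Ideal.Quotient.mk_surjective)
  refine ⟨s ∘ₗ ρ ∘ₗ π, fun f hf => ?_, fun f => ?_⟩
  · have : π f = 0 := Ideal.Quotient.eq_zero_iff_mem.2 hf
    simp [this]
  · refine Ideal.Quotient.eq_zero_iff_mem.1 ?_
    have h1 := LinearMap.congr_fun hs (ρ (π (l * f)))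
    have h2 := LinearMap.congr_fun hρ (π f)
    have h3 : π (l * f) = μ (π f) := map_mul (Ideal.Quotient.mk I) l f
    have h4 : π ((s ∘ₗ ρ ∘ₗ π) (l * f) - f) = 0 := by
      rw [map_sub]
      simp only [LinearMap.comp_apply, LinearMap.id_apply] at h1 h2 ⊢
      rw [h1, h3, h2, sub_self]
    exact h4

/-- The sum ideal. -/
abbrev JJ (I₁ : Ideal (PRing K m)) (I₂ : Ideal (PRing K n)) : Ideal (BiRing K m n) :=
  Ideal.map (iL K m n) I₁ ⊔ Ideal.map (iR K m n) I₂

lemma T_pres {I₁ : Ideal (PRing K m)} {I₂ : Ideal (PRing K n)}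
    {σ : PRing K m →ₗ[K] PRing K m} {τ : PRing K n →ₗ[K] PRing K n}
    (hσ : ∀ f ∈ I₁, σ f ∈ I₁) (hτ : ∀ f ∈ I₂, τ f ∈ I₂)
    {T : BiRing K m n →ₗ[K] BiRing K m n}
    (hT : ∀ a b, T (iL K m n a * iR K m n b) = iL K m n (σ a) * iR K m n (τ b))
    {z : BiRing K m n} (hz : z ∈ JJ K I₁ I₂) : T z ∈ JJ K I₁ I₂ := by
  have h1 : ∀ z ∈ Ideal.map (iL K m n) I₁, T z ∈ JJ K I₁ I₂ := by
    intro z hz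
    refine Submodule.span_induction (p := fun z _ => ∀ w, T (w * z) ∈ JJ K I₁ I₂)
      ?_ ?_ ?_ ?_ hz 1 |> fun h => by simpa using h
    · rintro _ ⟨a, ha, rfl⟩ w
      refine bi_ind K (P := fun w => T (w * iL K m n a) ∈ JJ K I₁ I₂) ?_ ?_ w
      · intro p q hp hq
        rw [add_mul, map_add]; exact add_mem hp hq
      · intro a' b'
        have : iL K m n a' * iR K m n b' * iL K m n a = iL K m n (a' * a) * iR K m n b' := by
          rw [map_mul]; ring
        rw [this, hT]
        exact Ideal.mul_mem_right _ _ (Ideal.mem_sup_left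
          (Ideal.mem_map_of_mem _ (hσ _ (I₁.mul_mem_left _ ha))))
    · intro w; simp
    · intro x y _ _ hx hy w
      rw [mul_add, map_add]; exact add_mem (hx w) (hy w)
    · intro c x _ hx w
      rw [smul_eq_mul, ← mul_assoc]; exact hx _
  have h2 : ∀ z ∈ Ideal.map (iR K m n) I₂, T z ∈ JJ K I₁ I₂ := by
    intro z hz
    refine Submodule.span_induction (p := fun z _ => ∀ w, T (w * z) ∈ JJ K I₁ I₂)
      ?_ ?_ ?_ ?_ hz 1 |> fun h => by simpa using h
    · rintro _ ⟨a, ha, rfl⟩ w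
      refine bi_ind K (P := fun w => T (w * iR K m n a) ∈ JJ K I₁ I₂) ?_ ?_ w
      · intro p q hp hq
        rw [add_mul, map_add]; exact add_mem hp hq
      · intro a' b'
        have : iL K m n a' * iR K m n b' * iR K m n a = iL K m n a' * iR K m n (b' * a) := by
          rw [map_mul]; ring
        rw [this, hT]
        exact Ideal.mul_mem_left _ _ (Ideal.mem_sup_right
          (Ideal.mem_map_of_mem _ (hτ _ (I₂.mul_mem_left _ ha))))
    · intro w; simp
    · intro x y _ _ hx hy w
      rw [mul_add, map_add]; exact add_mem (hx w) (hy w)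
    · intro c x _ hx w
      rw [smul_eq_mul, ← mul_assoc]; exact hx _
  obtain ⟨x, hx, y, hy, rfl⟩ := Submodule.mem_sup.1 hz
  rw [map_add]
  exact add_mem (h1 x hx) (h2 y hy)

lemma regPair_JJ {Y₁ : Finset (Fin (m+1) → K)} {Y₂ : Finset (Fin (n+1) → K)}
    {l : PRing K m} (hl : IsHom1 K l 1) (hlq : ∀ q ∈ Y₁, eval q l ≠ 0)
    {l' : PRing K n} (hl' : IsHom1 K l' 1) (hlq' : ∀ q ∈ Y₂, eval q l' ≠ 0) :
    RegPair (Ideal.Quotient.mk (JJ K (vIdeal1 K Y₁) (vIdeal1 K Y₂)) (iL K m n l))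
      (Ideal.Quotient.mk (JJ K (vIdeal1 K Y₁) (vIdeal1 K Y₂)) (iR K m n l')) := by
  obtain ⟨σ, hσ, hσl⟩ := exists_tau K hl hlq
  obtain ⟨τ, hτ, hτl⟩ := exists_tau K hl' hlq'
  obtain ⟨T, hT⟩ := exists_T K (n := n) σ LinearMap.id
  obtain ⟨U, hU⟩ := exists_T K (m := m) LinearMap.id τ
  constructor
  · intro z hz
    obtain ⟨z, rfl⟩ := Ideal.Quotient.mk_surjective z
    rw [← map_mul, Ideal.Quotient.eq_zero_iff_mem] at hz
    rw [Ideal.Quotient.eq_zero_iff_mem]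
    have h1 := T_pres K hσ (fun f hf => hf) hT hz
    have h2 : T (iL K m n l * z) - z ∈ JJ K (vIdeal1 K Y₁) (vIdeal1 K Y₂) := by
      refine bi_ind K (P := fun z => T (iL K m n l * z) - z ∈ JJ K (vIdeal1 K Y₁) (vIdeal1 K Y₂))
        ?_ ?_ z
      · intro p q hp hq
        rw [mul_add, map_add, add_sub_add_comm]; exact add_mem hp hq
      · intro a b
        rw [← mul_assoc, ← map_mul, hT, LinearMap.id_apply, ← sub_mul, ← map_sub]
        exact Ideal.mul_mem_right _ _ (Ideal.mem_sup_left (Ideal.mem_map_of_mem _ (hσl a)))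
    simpa using sub_mem h1 h2
  · intro z hz
    obtain ⟨z, rfl⟩ := Ideal.Quotient.mk_surjective z
    obtain ⟨w, hw⟩ := Ideal.mem_span_singleton'.1 hz
    obtain ⟨w, rfl⟩ := Ideal.Quotient.mk_surjective w
    rw [← map_mul, ← map_mul, Ideal.Quotient.eq] at hw
    have h1 := T_pres K (fun f hf => hf) hτ hU hw
    have h2 : U (iR K m n l' * z) - z ∈ JJ K (vIdeal1 K Y₁) (vIdeal1 K Y₂) := by
      refine bi_ind K (P := fun z => U (iR K m n l' * z) - z ∈ JJ K (vIdeal1 K Y₁) (vIdeal1 K Y₂))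
        ?_ ?_ z
      · intro p q hp hq
        rw [mul_add, map_add, add_sub_add_comm]; exact add_mem hp hq
      · intro a b
        rw [mul_left_comm, ← map_mul, hU, LinearMap.id_apply, ← mul_sub, ← map_sub]
        exact Ideal.mul_mem_left _ _ (Ideal.mem_sup_right (Ideal.mem_map_of_mem _ (hτl b)))
    have h3 : U (w * iL K m n l) = U w * iL K m n l := by
      refine bi_ind K (P := fun w => U (w * iL K m n l) = U w * iL K m n l) ?_ ?_ w
      · intro p q hp hq
        rw [add_mul, map_add, hp, hq, map_add, add_mul]
      · intro a b
        have : iL K m n a * iR K m n b * iL K m n l = iL K m n (a * l) * iR K m n b := by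
          rw [map_mul]; ring
        rw [this, hU, hU, LinearMap.id_apply, LinearMap.id_apply, map_mul]; ring
    rw [map_sub, h3] at h1
    refine Ideal.mem_span_singleton'.2 ⟨Ideal.Quotient.mk _ (U w), ?_⟩
    rw [← map_mul, Ideal.Quotient.eq]
    simpa using add_mem h1 h2

lemma fam (Y : Finset (Fin (N+1) → K)) (d : ℤ) : ∃ a : Fin (HF1 K Y d) → PRing K N,
    (∀ k, IsHom1 K (a k) d) ∧
    (∀ F, IsHom1 K F d → ∃ c : Fin (HF1 K Y d) → K, F - ∑ k, c k • a k ∈ vIdeal1 K Y) ∧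
    (∀ c : Fin (HF1 K Y d) → K, (∀ q ∈ Y, ∑ k, c k * eval q (a k) = 0) → ∀ k, c k = 0) := by
  let I := vIdeal1 K Y
  let P := degPiece1 K I d
  let ev : (PRing K N ⧸ I) →ₐ[K] (Y → K) :=
    Ideal.Quotient.liftₐ I (AlgHom.pi fun q : Y => aeval (q : Fin (N+1) → K)) (by
      intro f hf
      ext q
      simpa [aeval_eq_eval] using vIdeal1_eval K hf q.2)
  have hev : ∀ f (q : Y), ev (Ideal.Quotient.mk I f) q = eval (q : Fin (N+1) → K) f := by
    intro f q
    rfl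
  have hinj : Function.Injective (ev.toLinearMap ∘ₗ P.subtype) := by
    rw [← LinearMap.ker_eq_bot, LinearMap.ker_eq_bot']
    rintro ⟨_, f, hf, rfl⟩ h
    refine Subtype.ext (Ideal.Quotient.eq_zero_iff_mem.2 (Ideal.subset_span ⟨⟨d, hf⟩, ?_⟩))
    intro q hq
    rw [← hev f ⟨q, hq⟩]
    exact congrFun h ⟨q, hq⟩
  haveI : Module.Finite K P := Module.Finite.of_injective _ hinj
  let B : Module.Basis (Fin (HF1 K Y d)) K P := Module.finBasis K P
  have hB : ∀ k, ∃ f : PRing K N, IsHom1 K f d ∧ Ideal.Quotient.mk I f = (B k : PRing K N ⧸ I) := by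
    intro k
    obtain ⟨f, hf, h⟩ := (B k).2
    exact ⟨f, hf, h⟩
  choose a ha hab using hB
  have hmk : ∀ c : Fin (HF1 K Y d) → K, Ideal.Quotient.mk I (∑ k, c k • a k) =
      ((∑ k, c k • B k : P) : PRing K N ⧸ I) := by
    intro c
    rw [map_sum, Submodule.coe_sum]
    refine Finset.sum_congr rfl fun k _ => ?_
    rw [Submodule.coe_smul, ← hab]
    exact map_smul (Ideal.Quotient.mkₐ K I) (c k) (a k)
  refine ⟨a, ha, fun F hF => ?_, fun c hc => ?_⟩
  · let x : P := ⟨Ideal.Quotient.mk I F, F, hF, rfl⟩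
    refine ⟨B.repr x, ?_⟩
    rw [← Ideal.Quotient.eq, hmk, B.sum_repr]
  · have h0 : ∑ k, c k • B k = 0 := by
      apply hinj
      rw [map_zero]
      ext q
      change ev ((∑ k, c k • B k : P) : PRing K N ⧸ I) q = 0
      rw [← hmk, hev, map_sum, ← hc q q.2]
      simp [smul_eval]
    exact fun k => Fintype.linearIndependent_iff.1 B.linearIndependent c h0 k

lemma span_ab {Y₁ : Finset (Fin (m+1) → K)} {Y₂ : Finset (Fin (n+1) → K)} {i j : ℤ} {r s : ℕ}
    {a : Fin r → PRing K m} {b : Fin s → PRing K n}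
    (ha : ∀ F, IsHom1 K F i → ∃ c : Fin r → K, F - ∑ k, c k • a k ∈ vIdeal1 K Y₁)
    (hb : ∀ F, IsHom1 K F j → ∃ c : Fin s → K, F - ∑ k, c k • b k ∈ vIdeal1 K Y₂)
    (F : BiRing K m n) (hF : IsBihom K F (i, j)) : ∃ c : Fin r → Fin s → K,
      F - ∑ k, ∑ t, c k t • (iL K m n (a k) * iR K m n (b t)) ∈
        JJ K (vIdeal1 K Y₁) (vIdeal1 K Y₂) := by
  refine bihom_ind K (P := fun F => ∃ c : Fin r → Fin s → K,
      F - ∑ k, ∑ t, c k t • (iL K m n (a k) * iR K m n (b t)) ∈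
        JJ K (vIdeal1 K Y₁) (vIdeal1 K Y₂)) i j ⟨0, by simp⟩ ?_ ?_ F hF
  · rintro p q ⟨c, hc⟩ ⟨c', hc'⟩
    refine ⟨c + c', ?_⟩
    simp only [Pi.add_apply, add_smul, Finset.sum_add_distrib]
    rw [add_sub_add_comm]
    exact add_mem hc hc'
  · intro f g hf hg
    obtain ⟨c, hc⟩ := ha f hf
    obtain ⟨c', hc'⟩ := hb g hg
    refine ⟨fun k t => c k * c' t, ?_⟩
    have : ∑ k, ∑ t, (c k * c' t) • (iL K m n (a k) * iR K m n (b t)) =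
        iL K m n (∑ k, c k • a k) * iR K m n (∑ t, c' t • b t) := by
      simp only [map_sum, map_smul, Finset.sum_mul_sum, smul_mul_smul_comm]
    rw [this]
    have h2 : iL K m n f * iR K m n g - iL K m n (∑ k, c k • a k) * iR K m n (∑ t, c' t • b t) =
        iL K m n (f - ∑ k, c k • a k) * iR K m n g +
        iL K m n (∑ k, c k • a k) * iR K m n (g - ∑ t, c' t • b t) := by
      rw [map_sub, map_sub]; ring
    rw [h2]
    exact add_mem
      (Ideal.mul_mem_right _ _ (Ideal.mem_sup_left (Ideal.mem_map_of_mem _ hc)))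
      (Ideal.mul_mem_left _ _ (Ideal.mem_sup_right (Ideal.mem_map_of_mem _ hc')))

lemma indep_ab {Y₁ : Finset (Fin (m+1) → K)} {Y₂ : Finset (Fin (n+1) → K)} {r s : ℕ}
    {a : Fin r → PRing K m} {b : Fin s → PRing K n}
    (ha : ∀ c : Fin r → K, (∀ q ∈ Y₁, ∑ k, c k * eval q (a k) = 0) → ∀ k, c k = 0)
    (hb : ∀ c : Fin s → K, (∀ q ∈ Y₂, ∑ k, c k * eval q (b k) = 0) → ∀ k, c k = 0)
    (c : Fin r → Fin s → K)
    (hc : ∀ p ∈ Y₁ ×ˢ Y₂,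
      evalB K p (∑ k, ∑ t, c k t • (iL K m n (a k) * iR K m n (b t))) = 0) :
    ∀ k t, c k t = 0 := by
  intro k
  refine hb (c k) fun q hq => ?_
  refine ha (fun k => ∑ t, c k t * eval q (b t)) (fun p hp => ?_) k
  have := hc (p, q) (Finset.mem_product.2 ⟨hp, hq⟩)
  rw [← this]
  have hmul : ∀ k t, evalB K (p, q) (iL K m n (a k) * iR K m n (b t)) =
      eval p (a k) * eval q (b t) := by
    intro k t
    rw [← eval_iL K (p, q), ← eval_iR K (p, q)]
    exact map_mul (eval _) _ _
  have hsum : evalB K (p, q) (∑ k, ∑ t, c k t • (iL K m n (a k) * iR K m n (b t))) =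
      ∑ k, ∑ t, c k t * evalB K (p, q) (iL K m n (a k) * iR K m n (b t)) := by
    unfold evalB
    simp only [map_sum, smul_eval]
  rw [hsum]
  refine Finset.sum_congr rfl fun k _ => ?_
  rw [Finset.sum_mul]
  refine Finset.sum_congr rfl fun t _ => ?_
  rw [hmul]; ring

lemma JJ_le (Y₁ : Finset (Fin (m+1) → K)) (Y₂ : Finset (Fin (n+1) → K)) :
    JJ K (vIdeal1 K Y₁) (vIdeal1 K Y₂) ≤ vIdealB K (Y₁ ×ˢ Y₂) := by
  refine sup_le (Ideal.map_le_iff_le_comap.2 (Ideal.span_le.2 ?_))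
    (Ideal.map_le_iff_le_comap.2 (Ideal.span_le.2 ?_))
  · rintro f ⟨⟨d, hd⟩, hf⟩
    refine Ideal.subset_span ⟨⟨(d, 0), ?_⟩, fun p hp => ?_⟩
    · have := bihom_mul K (n := n) hd (isWeightedHomogeneous_one K (wt1 n))
      simpa using this
    · exact (eval_iL K p f).trans (hf _ (Finset.mem_product.1 hp).1)
  · rintro f ⟨⟨d, hd⟩, hf⟩
    refine Ideal.subset_span ⟨⟨(0, d), ?_⟩, fun p hp => ?_⟩
    · have := bihom_mul K (m := m) (isWeightedHomogeneous_one K (wt1 m)) hd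
      simpa using this
    · exact (eval_iR K p f).trans (hf _ (Finset.mem_product.1 hp).2)

lemma ideal_eq (Y₁ : Finset (Fin (m+1) → K)) (Y₂ : Finset (Fin (n+1) → K)) :
    vIdealB K (Y₁ ×ˢ Y₂) = JJ K (vIdeal1 K Y₁) (vIdeal1 K Y₂) := by
  refine le_antisymm (Ideal.span_le.2 ?_) (JJ_le K Y₁ Y₂)
  rintro F ⟨⟨⟨i, j⟩, hd⟩, hF⟩
  obtain ⟨a, ha, ha1, ha2⟩ := fam K Y₁ i
  obtain ⟨b, hb, hb1, hb2⟩ := fam K Y₂ j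
  obtain ⟨c, hc⟩ := span_ab K ha1 hb1 F hd
  have h0 := indep_ab K ha2 hb2 c (fun p hp => by
    have h1 := vIdealB_eval K (JJ_le K Y₁ Y₂ hc) hp
    have h2 : evalB K p F - evalB K p
      (∑ k, ∑ t, c k t • (iL K m n (a k) * iR K m n (b t))) = 0 := by
      rw [← h1]; exact (map_sub (eval _) _ _).symm
    rw [hF p hp, zero_sub, neg_eq_zero] at h2
    exact h2)
  simpa [h0] using hc

lemma HF_eq (Y₁ : Finset (Fin (m+1) → K)) (Y₂ : Finset (Fin (n+1) → K)) (i j : ℤ) :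
    HFB K (Y₁ ×ˢ Y₂) (i, j) = HF1 K Y₁ i * HF1 K Y₂ j := by
  obtain ⟨a, ha, ha1, ha2⟩ := fam K Y₁ i
  obtain ⟨b, hb, hb1, hb2⟩ := fam K Y₂ j
  let I := vIdealB K (Y₁ ×ˢ Y₂)
  let P := degPieceB K I (i, j)
  let v : Fin (HF1 K Y₁ i) × Fin (HF1 K Y₂ j) → P := fun kt =>
    ⟨Ideal.Quotient.mk I (iL K m n (a kt.1) * iR K m n (b kt.2)), _,
      bihom_mul K (ha kt.1) (hb kt.2), rfl⟩
  have hmk : ∀ c : Fin (HF1 K Y₁ i) × Fin (HF1 K Y₂ j) → K,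
      ((∑ x, c x • v x : P) : BiRing K m n ⧸ I) = Ideal.Quotient.mk I
        (∑ k, ∑ t, c (k, t) • (iL K m n (a k) * iR K m n (b t))) := by
    intro c
    rw [← Fintype.sum_prod_type'
      (f := fun k t => c (k, t) • (iL K m n (a k) * iR K m n (b t))), map_sum, Submodule.coe_sum]
    refine Finset.sum_congr rfl fun x _ => ?_
    rw [Submodule.coe_smul]
    exact (map_smul (Ideal.Quotient.mkₐ K I) _ _).symm
  have hli : LinearIndependent K v := by
    rw [Fintype.linearIndependent_iff]
    rintro c hc ⟨k, t⟩
    refine indep_ab K ha2 hb2 (fun k t => c (k, t)) (fun p hp => ?_) k t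
    refine vIdealB_eval K (Ideal.Quotient.eq_zero_iff_mem.1 ?_) hp
    rw [← hmk, hc]; rfl
  have hsp : ⊤ ≤ Submodule.span K (Set.range v) := by
    rintro ⟨_, F, hF, rfl⟩ -
    obtain ⟨c, hc⟩ := span_ab K ha1 hb1 F hF
    rw [← ideal_eq, ← Ideal.Quotient.eq] at hc
    rw [Submodule.mem_span_range_iff_exists_fun]
    refine ⟨fun x => c x.1 x.2, Subtype.ext ?_⟩
    rw [hmk]
    exact hc.symm
  have := Module.finrank_eq_card_basis (Module.Basis.mk hli hsp)
  rw [Fintype.card_prod, Fintype.card_fin, Fintype.card_fin] at this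
  exact this

lemma acm_prod (Y₁ : Finset (Fin (m+1) → K)) (Y₂ : Finset (Fin (n+1) → K))
    (h₁ : ∀ q ∈ Y₁, q ≠ 0) (h₂ : ∀ q ∈ Y₂, q ≠ 0) : IsACM K (Y₁ ×ˢ Y₂) := by
  obtain ⟨l, hl, hlq⟩ := exists_lin K h₁
  obtain ⟨l', hl', hlq'⟩ := exists_lin K h₂
  refine ⟨iL K m n l, iR K m n l', ?_, ?_, ?_⟩
  · simpa using bihom_mul K (n := n) hl (isWeightedHomogeneous_one K (wt1 n))
  · simpa using bihom_mul K (m := m) (isWeightedHomogeneous_one K (wt1 m)) hl'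
  · have key : ∀ J : Ideal (BiRing K m n), J = JJ K (vIdeal1 K Y₁) (vIdeal1 K Y₂) →
        RegPair (Ideal.Quotient.mk J (iL K m n l)) (Ideal.Quotient.mk J (iR K m n l')) := by
      rintro J rfl
      exact regPair_JJ K hl hlq hl' hlq'
    exact key _ (ideal_eq K Y₁ Y₂)

end Helpers

end MultiProjPoints
open MultiProjPoints in
/-- Lemma 4.2: if `𝕏 = 𝕏₁ × 𝕏₂` then `𝕏` is ACM,
`I_𝕏 = I_{𝕏₁}S + I_{𝕏₂}S`, and `HF_𝕏(i,j) = HF_{𝕏₁}(i)·HF_{𝕏₂}(j)` for all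
`(i,j) ∈ ℤ²`. -/
theorem statement_9 (K : Type) [Field K] [CharZero K] [DecidableEq K]
    (m n : ℕ) (𝕏 : Finset (BiPt K m n)) (hgood : GoodConfig K 𝕏)
    (hne : 𝕏.Nonempty)
    (hprod : 𝕏 = (𝕏.image Prod.fst) ×ˢ (𝕏.image Prod.snd)) :
    IsACM K 𝕏 ∧
    vIdealB K 𝕏 =
      Ideal.map (rename Sum.inl : PRing K m →ₐ[K] BiRing K m n)
        (vIdeal1 K (𝕏.image Prod.fst)) ⊔
      Ideal.map (rename Sum.inr : PRing K n →ₐ[K] BiRing K m n)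
        (vIdeal1 K (𝕏.image Prod.snd)) ∧
    ∀ i j : ℤ, HFB K 𝕏 (i, j) =
      HF1 K (𝕏.image Prod.fst) i * HF1 K (𝕏.image Prod.snd) j := by
  refine ⟨?_, ?_, fun i j => ?_⟩
  · rw [hprod]
    refine acm_prod K _ _ ?_ ?_
    · intro q hq
      obtain ⟨p, hp, rfl⟩ := Finset.mem_image.1 hq
      exact (hgood.1 p hp).1
    · intro q hq
      obtain ⟨p, hp, rfl⟩ := Finset.mem_image.1 hq
      exact (hgood.1 p hp).2
  · exact (congrArg (vIdealB K) hprod).trans (ideal_eq K _ _)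
  · exact (congrArg (fun Z => HFB K Z (i, j)) hprod).trans (HF_eq K _ _ i j)
end
end

section
/- Let X be an ACM set of s distinct points in P^m × P^n. If q × q' ∈ X, then deg_X(q × q') ⪯ (deg_{X_1}(q), deg_{X_2}(q')) ⪯ (r_{X_1}, r_{X_2}). -/
/- Common setup: finite sets of points in the multiprojective space
   `P^m x P^n` over a field `K` of characteristic zero, their bihomogeneous
   vanishing ideals, bigraded Hilbert functions, Kähler differents,
   separators, Cayley-Bacharach property and complete intersections. -/

open MvPolynomial

set_option maxHeartbeats 1000000
set_option synthInstance.maxHeartbeats 400000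

noncomputable section

namespace MultiProjPoints

section helpers

/-! ### One projective space -/

/-- A linear form vanishing at `q'` but not at `q`. -/
lemma exists_linform {K : Type} [Field K] {N : ℕ} (q q' : Fin (N+1) → K) (hq : q ≠ 0)
    (hq' : q' ≠ 0) (h : ¬ ∃ c : K, c ≠ 0 ∧ q = c • q') :
    ∃ L : MvPolynomial (Fin (N+1)) K, IsHom1 K L 1 ∧ eval q L ≠ 0 ∧ eval q' L = 0 := by
  obtain ⟨j, hj⟩ := Function.ne_iff.mp hq'
  simp only [Pi.zero_apply] at hj
  have hex : ∃ i, q i * q' j ≠ q j * q' i := by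
    by_contra hcon
    push Not at hcon
    have hqe : q = (q j / q' j) • q' := by
      funext i
      simp only [Pi.smul_apply, smul_eq_mul]
      field_simp
      exact hcon i
    apply h
    refine ⟨q j / q' j, ?_, hqe⟩
    intro h0
    rw [h0, zero_smul] at hqe
    exact hq hqe
  obtain ⟨i, hi⟩ := hex
  refine ⟨C (q' j) * X i - C (q' i) * X j, ?_, ?_, ?_⟩
  · exact ((isWeightedHomogeneous_X K (wt1 N) i).C_mul _).sub
      ((isWeightedHomogeneous_X K (wt1 N) j).C_mul _)
  · simp only [map_sub, map_mul, eval_C, eval_X]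
    intro h0
    apply hi
    linear_combination h0
  · simp only [map_sub, map_mul, eval_C, eval_X]
    ring

lemma exists_sep1 {K : Type} [Field K] [DecidableEq K] {N : ℕ} (Y : Finset (Fin (N+1) → K))
    (hY : GoodSet K Y) (q : Fin (N+1) → K) (hq : q ∈ Y) (d : ℕ) (hd : Y.card ≤ d) :
    ∃ F : PRing K N, IsHom1 K F (d : ℤ) ∧ eval q F ≠ 0 ∧
      ∀ q' ∈ Y, q' ≠ q → eval q' F = 0 := by
  have hL : ∀ q' : Fin (N+1) → K, ∃ L : PRing K N, q' ∈ Y.erase q →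
      (IsHom1 K L 1 ∧ eval q L ≠ 0 ∧ eval q' L = 0) := by
    intro q'
    by_cases h : q' ∈ Y.erase q
    · rw [Finset.mem_erase] at h
      obtain ⟨L, hL⟩ := exists_linform q q' (hY.1 q hq) (hY.1 q' h.2)
        (fun hc => h.1 (hY.2 q hq q' h.2 hc).symm)
      exact ⟨L, fun _ => hL⟩
    · exact ⟨0, fun h' => absurd h' h⟩
  choose L hL using hL
  obtain ⟨k, hk⟩ := Function.ne_iff.mp (hY.1 q hq)
  simp only [Pi.zero_apply] at hk
  refine ⟨X k ^ (d - (Y.erase q).card) * ∏ q' ∈ Y.erase q, L q', ?_, ?_, ?_⟩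
  · have h1 := (isWeightedHomogeneous_X K (wt1 N) k).pow (d - (Y.erase q).card)
    have h2 := IsWeightedHomogeneous.prod (w := wt1 N) (Y.erase q) L (fun _ => (1 : ℤ))
      (fun q' h => (hL q' h).1)
    have h3 := h1.mul h2
    have hc : (Y.erase q).card ≤ d := (Finset.card_erase_le).trans hd
    have he : (d - (Y.erase q).card) • wt1 N k + ∑ q' ∈ Y.erase q, (1 : ℤ) = (d : ℤ) := by
      simp only [wt1, Finset.sum_const, nsmul_eq_mul, mul_one]
      push_cast [hc]
      ring
    rw [he] at h3
    exact h3
  · rw [map_mul, map_pow, eval_X, map_prod]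
    refine mul_ne_zero (pow_ne_zero _ hk) (Finset.prod_ne_zero_iff.mpr fun q' h => (hL q' h).2.1)
  · intro q' h1 h2
    have h : q' ∈ Y.erase q := Finset.mem_erase.mpr ⟨h2, h1⟩
    rw [map_mul, map_prod, Finset.prod_eq_zero h (hL q' h).2.2, mul_zero]

/-- The evaluation map on forms of degree `d`. -/
def ev1 (K : Type) [Field K] {N : ℕ} (Y : Finset (Fin (N+1) → K)) (d : ℤ) :
    weightedHomogeneousSubmodule K (wt1 N) d →ₗ[K] (Y → K) :=
  LinearMap.pi fun q => (MvPolynomial.aeval (R := K) (q : Fin (N+1) → K)).toLinearMap.comp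
    (Submodule.subtype _)

lemma ev1_apply (K : Type) [Field K] {N : ℕ} (Y : Finset (Fin (N+1) → K)) (d : ℤ)
    (F : weightedHomogeneousSubmodule K (wt1 N) d) (q : Y) :
    ev1 K Y d F q = eval (q : Fin (N+1) → K) (F : PRing K N) := by
  simp [ev1, MvPolynomial.aeval_eq_eval]

lemma eval_of_mem_vIdeal1 {K : Type} [Field K] {N : ℕ} {Y : Finset (Fin (N+1) → K)}
    {F : PRing K N} (hF : F ∈ vIdeal1 K Y) : ∀ q ∈ Y, eval q F = 0 := by
  intro q hq
  have : vIdeal1 K Y ≤ RingHom.ker (eval q) := by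
    refine Ideal.span_le.mpr ?_
    intro G hG
    exact hG.2 q hq
  exact this hF

lemma HF1_eq (K : Type) [Field K] {N : ℕ} (Y : Finset (Fin (N+1) → K)) (d : ℤ) :
    HF1 K Y d = Module.finrank K (LinearMap.range (ev1 K Y d)) := by
  have hk : LinearMap.ker ((Ideal.Quotient.mkₐ K (vIdeal1 K Y)).toLinearMap.comp
      (weightedHomogeneousSubmodule K (wt1 N) d).subtype) = LinearMap.ker (ev1 K Y d) := by
    ext F
    simp only [LinearMap.mem_ker, LinearMap.comp_apply, Submodule.subtype_apply,
      AlgHom.toLinearMap_apply, Ideal.Quotient.mkₐ_eq_mk, Ideal.Quotient.eq_zero_iff_mem]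
    constructor
    · intro h
      funext q
      rw [ev1_apply]
      exact eval_of_mem_vIdeal1 h q q.2
    · intro h
      refine Ideal.subset_span ⟨⟨d, F.2⟩, fun q hq => ?_⟩
      have := congrFun h ⟨q, hq⟩
      rwa [ev1_apply] at this
  have hr : degPiece1 K (vIdeal1 K Y) d =
      LinearMap.range ((Ideal.Quotient.mkₐ K (vIdeal1 K Y)).toLinearMap.comp
      (weightedHomogeneousSubmodule K (wt1 N) d).subtype) := by
    rw [LinearMap.range_comp, Submodule.range_subtype]
    rfl
  unfold HF1
  rw [hr]
  exact LinearEquiv.finrank_eq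
    ((LinearMap.quotKerEquivRange _).symm.trans
      ((Submodule.quotEquivOfEq _ _ hk).trans (LinearMap.quotKerEquivRange _)))

lemma HF1_eq_card_iff (K : Type) [Field K] {N : ℕ} (Y : Finset (Fin (N+1) → K)) (d : ℤ) :
    HF1 K Y d = Y.card ↔ Function.Surjective (ev1 K Y d) := by
  rw [HF1_eq, ← LinearMap.range_eq_top]
  have hc : Module.finrank K (Y → K) = Y.card := by simp
  constructor
  · intro h
    exact Submodule.eq_top_of_finrank_eq (h.trans hc.symm)
  · intro h
    rw [h, finrank_top, hc]

lemma HF1_large {K : Type} [Field K] [DecidableEq K] {N : ℕ} (Y : Finset (Fin (N+1) → K))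
    (hY : GoodSet K Y) (d : ℕ) (hd : Y.card ≤ d) : HF1 K Y (d : ℤ) = Y.card := by
  rw [HF1_eq_card_iff, ← LinearMap.range_eq_top, eq_top_iff]
  rintro v -
  choose F hF using fun q : Y => exists_sep1 Y hY q q.2 d hd
  refine ⟨∑ q : Y, (v q / eval (q : Fin (N+1) → K) (F q)) • ⟨F q, (hF q).1⟩, ?_⟩
  funext r
  rw [map_sum, Finset.sum_apply, Finset.sum_eq_single r]
  · rw [map_smul, Pi.smul_apply, ev1_apply, smul_eq_mul]
    exact div_mul_cancel₀ _ (hF r).2.1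
  · intro q _ hqr
    rw [map_smul, Pi.smul_apply, ev1_apply]
    rw [show eval (r : Fin (N+1) → K) (F q) = 0 from
      (hF q).2.2 r r.2 (fun h => hqr (Subtype.ext h).symm), smul_zero]
  · intro h
    exact absurd (Finset.mem_univ _) h

lemma deg1_le_regIndex1 {K : Type} [Field K] [DecidableEq K] {N : ℕ}
    (Y : Finset (Fin (N+1) → K)) (hY : GoodSet K Y) (q : Fin (N+1) → K) (hq : q ∈ Y) :
    deg1 K Y q ≤ regIndex1 K Y := by
  have hmem : regIndex1 K Y ∈ {r : ℕ | ∀ i : ℕ, r ≤ i → HF1 K Y (i : ℤ) = Y.card} :=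
    Nat.sInf_mem ⟨Y.card, fun i hi => HF1_large Y hY i hi⟩
  have hs := (HF1_eq_card_iff K Y _).mp (hmem _ le_rfl)
  obtain ⟨F, hF⟩ := hs (Pi.single ⟨q, hq⟩ 1)
  refine Nat.sInf_le ⟨F, F.2, ?_, ?_⟩
  · have := congrFun hF ⟨q, hq⟩
    rw [ev1_apply, Pi.single_eq_same] at this
    simp only at this
    rw [this]
    exact one_ne_zero
  · intro q' h1 h2
    have := congrFun hF ⟨q', h1⟩
    rw [ev1_apply, Pi.single_eq_of_ne (fun h => h2 (congrArg Subtype.val h))] at this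
    exact this

lemma deg1_spec {K : Type} [Field K] [DecidableEq K] {N : ℕ}
    (Y : Finset (Fin (N+1) → K)) (hY : GoodSet K Y) (q : Fin (N+1) → K) (hq : q ∈ Y) :
    ∃ F : PRing K N, IsHom1 K F ((deg1 K Y q : ℕ) : ℤ) ∧ eval q F ≠ 0 ∧
      ∀ q' ∈ Y, q' ≠ q → eval q' F = 0 :=
  Nat.sInf_mem (s := {d : ℕ | ∃ F : PRing K N, IsHom1 K F (d : ℤ) ∧ eval q F ≠ 0 ∧
    ∀ q' ∈ Y, q' ≠ q → eval q' F = 0}) ⟨Y.card, exists_sep1 Y hY q hq _ le_rfl⟩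

/-! ### The product of two projective spaces -/

lemma isBihom_rename_inl {K : Type} [Field K] {m n : ℕ} {F : PRing K m} {d : ℤ}
    (hF : IsHom1 K F d) : IsBihom K (rename Sum.inl F : BiRing K m n) (d, 0) := by
  intro e he
  obtain ⟨u, rfl, hu⟩ := coeff_rename_ne_zero _ _ _ he
  have := hF hu
  rw [← this]
  simp only [Finsupp.weight_apply]
  rw [Finsupp.sum_mapDomain_index (by simp) (by intros; simp [add_mul, add_smul])]
  simp only [Finsupp.sum, biwt, Sum.elim_inl, wt1]
  ext <;> simp [Prod.fst_sum, Prod.snd_sum]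

lemma isBihom_rename_inr {K : Type} [Field K] {m n : ℕ} {F : PRing K n} {d : ℤ}
    (hF : IsHom1 K F d) : IsBihom K (rename Sum.inr F : BiRing K m n) (0, d) := by
  intro e he
  obtain ⟨u, rfl, hu⟩ := coeff_rename_ne_zero _ _ _ he
  have := hF hu
  rw [← this]
  simp only [Finsupp.weight_apply]
  rw [Finsupp.sum_mapDomain_index (by simp) (by intros; simp [add_mul, add_smul])]
  simp only [Finsupp.sum, biwt, Sum.elim_inr, wt1]
  ext <;> simp [Prod.fst_sum, Prod.snd_sum]

lemma bihom_neg {K : Type} [Field K] {m n : ℕ} {F : BiRing K m n} {d : ℤ × ℤ}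
    (hF : IsBihom K F d) (hd : d.1 < 0) : F = 0 := by
  refine IsWeightedHomogeneous.eq_zero_of_no_monomials hF ?_
  intro e he
  rw [← he, Finsupp.weight_apply, Finsupp.sum, Prod.fst_sum] at hd
  refine absurd hd (not_lt.mpr (Finset.sum_nonneg fun i _ => ?_))
  rcases i with i | i <;> simp [biwt]

lemma goodSet_fst {K : Type} [Field K] [DecidableEq K] {m n : ℕ} {𝕏 : Finset (BiPt K m n)}
    (h : GoodConfig K 𝕏) : GoodSet K (𝕏.image Prod.fst) := by
  constructor
  · intro q hq
    obtain ⟨p, hp, rfl⟩ := Finset.mem_image.mp hq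
    exact (h.1 p hp).1
  · intro q hq q' hq' hc
    obtain ⟨p, hp, rfl⟩ := Finset.mem_image.mp hq
    obtain ⟨p', hp', rfl⟩ := Finset.mem_image.mp hq'
    exact h.2.1 p hp p' hp' hc

lemma goodSet_snd {K : Type} [Field K] [DecidableEq K] {m n : ℕ} {𝕏 : Finset (BiPt K m n)}
    (h : GoodConfig K 𝕏) : GoodSet K (𝕏.image Prod.snd) := by
  constructor
  · intro q hq
    obtain ⟨p, hp, rfl⟩ := Finset.mem_image.mp hq
    exact (h.1 p hp).2
  · intro q hq q' hq' hc
    obtain ⟨p, hp, rfl⟩ := Finset.mem_image.mp hq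
    obtain ⟨p', hp', rfl⟩ := Finset.mem_image.mp hq'
    exact h.2.2 p hp p' hp' hc

lemma sepDegs_deg1 {K : Type} [Field K] [DecidableEq K] {m n : ℕ} {𝕏 : Finset (BiPt K m n)}
    (h : GoodConfig K 𝕏) {p : BiPt K m n} (hp : p ∈ 𝕏) :
    ((deg1 K (𝕏.image Prod.fst) p.1 : ℤ), (deg1 K (𝕏.image Prod.snd) p.2 : ℤ))
      ∈ sepDegsB K 𝕏 p := by
  obtain ⟨F, hF, hFp, hF0⟩ := deg1_spec _ (goodSet_fst h) p.1 (Finset.mem_image_of_mem _ hp)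
  obtain ⟨G, hG, hGp, hG0⟩ := deg1_spec _ (goodSet_snd h) p.2 (Finset.mem_image_of_mem _ hp)
  have hev : ∀ q : BiPt K m n, evalB K q (rename Sum.inl F * rename Sum.inr G)
      = eval q.1 F * eval q.2 G := by
    intro q
    simp only [evalB, map_mul, eval_rename, Sum.elim_comp_inl, Sum.elim_comp_inr]
  refine ⟨rename Sum.inl F * rename Sum.inr G, ?_, ?_, ?_⟩
  · have := (isBihom_rename_inl (n := n) hF).mul (isBihom_rename_inr (m := m) hG)
    simpa [IsBihom] using this
  · rw [hev]
    exact mul_ne_zero hFp hGp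
  · intro q hq hqp
    rw [hev]
    by_cases h1 : q.1 = p.1
    · have h2 : q.2 ≠ p.2 := fun h2 => hqp (Prod.ext h1 h2)
      rw [hG0 q.2 (Finset.mem_image_of_mem _ hq) h2, mul_zero]
    · rw [hF0 q.1 (Finset.mem_image_of_mem _ hq) h1, zero_mul]

lemma evalB_of_mem {K : Type} [Field K] {m n : ℕ} {𝕏 : Finset (BiPt K m n)}
    {F : BiRing K m n} (hF : F ∈ vIdealB K 𝕏) : ∀ q ∈ 𝕏, evalB K q F = 0 := by
  intro q hq
  have : vIdealB K 𝕏 ≤ RingHom.ker (eval (Sum.elim q.1 q.2)) := by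
    refine Ideal.span_le.mpr ?_
    intro G hG
    exact hG.2 q hq
  exact this hF

/-- If a bihomogeneous `G` lies in `(x₀) + I`, the cofactor of `x₀` may be chosen bihomogeneous. -/
lemma exists_cofactor {K : Type} [Field K] {m n : ℕ} {𝕏 : Finset (BiPt K m n)}
    {G : BiRing K m n} {c e : ℤ} (hG : IsBihom K G (c, e))
    (h : Ideal.Quotient.mk (vIdealB K 𝕏) G ∈ Ideal.span {x0B K (vIdealB K 𝕏)}) :
    ∃ A : BiRing K m n, IsBihom K A (c - 1, e) ∧
      G - X (Sum.inl 0) * A ∈ vIdealB K 𝕏 := by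
  classical
  letI := MvPolynomial.weightedGradedAlgebra K (biwt m n)
  obtain ⟨a, ha⟩ := Ideal.mem_span_singleton'.mp h
  obtain ⟨A, rfl⟩ := Ideal.Quotient.mk_surjective a
  have hmem : G - X (Sum.inl 0) * A ∈ vIdealB K 𝕏 := by
    rw [← Ideal.Quotient.eq, ← ha, x0B, ← map_mul, mul_comm]
  have hhom : (vIdealB K 𝕏).IsHomogeneous (weightedHomogeneousSubmodule K (biwt m n)) := by
    refine Ideal.homogeneous_span _ _ ?_
    rintro F ⟨⟨d, hd⟩, -⟩
    exact ⟨d, hd⟩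
  have hc := hhom (c, e) hmem
  have hX : (X (Sum.inl 0) : BiRing K m n) ∈
      weightedHomogeneousSubmodule K (biwt m n) (1, 0) :=
    isWeightedHomogeneous_X K (biwt m n) (Sum.inl 0)
  refine ⟨DirectSum.decompose (weightedHomogeneousSubmodule K (biwt m n)) A (c - 1, e),
    (DirectSum.decompose (weightedHomogeneousSubmodule K (biwt m n)) A (c - 1, e)).2, ?_⟩
  have hx := DirectSum.coe_decompose_mul_add_of_left_mem
    (weightedHomogeneousSubmodule K (biwt m n)) (b := A) (j := (c - 1, e)) hX
  have he : ((1, 0) : ℤ × ℤ) + (c - 1, e) = (c, e) := by ext <;> simp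
  rw [he] at hx
  have hg := DirectSum.decompose_of_mem_same
    (weightedHomogeneousSubmodule K (biwt m n)) (x := G) (i := (c, e)) hG
  rw [DirectSum.decompose_sub, DirectSum.sub_apply, Submodule.coe_sub, hx, hg] at hc
  exact hc

lemma x0_ne {K : Type} [Field K] [DecidableEq K] {m n : ℕ} {𝕏 : Finset (BiPt K m n)}
    (h : GoodConfig K 𝕏) (hACM : ACMxy K 𝕏) {q : BiPt K m n} (hq : q ∈ 𝕏) : q.1 0 ≠ 0 := by
  intro h0
  obtain ⟨F, hF, hFq, hF0⟩ := sepDegs_deg1 h hq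
  have hmem : X (Sum.inl 0) * F ∈ vIdealB K 𝕏 := by
    refine Ideal.subset_span ⟨⟨_, (isWeightedHomogeneous_X K (biwt m n) (Sum.inl 0)).mul hF⟩, ?_⟩
    intro r hr
    by_cases hrq : r = q
    · subst hrq
      simp [evalB, h0]
    · have := hF0 r hr hrq
      simp only [evalB] at this ⊢
      rw [map_mul, this, mul_zero]
  have hz := hACM.1 (Ideal.Quotient.mk _ F) (by
    rw [x0B, ← map_mul]
    exact Ideal.Quotient.eq_zero_iff_mem.mpr hmem)
  exact hFq (evalB_of_mem (Ideal.Quotient.eq_zero_iff_mem.mp hz) q hq)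

/-- One descent step. -/
lemma descend {K : Type} [Field K] [DecidableEq K] {m n : ℕ} {𝕏 : Finset (BiPt K m n)}
    (h : GoodConfig K 𝕏) (hACM : ACMxy K 𝕏) {p : BiPt K m n} (hp : p ∈ 𝕏)
    {G : BiRing K m n} {c e : ℤ} (hG : IsBihom K G (c, e)) (hs : IsSepB K 𝕏 p G) (k : ℕ)
    (hk : Ideal.Quotient.mk (vIdealB K 𝕏) (X (Sum.inr 0) ^ k * G) ∈
      Ideal.span {x0B K (vIdealB K 𝕏)}) : (c - 1, e) ∈ sepDegsB K 𝕏 p := by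
  have hmem : Ideal.Quotient.mk (vIdealB K 𝕏) G ∈ Ideal.span {x0B K (vIdealB K 𝕏)} := by
    induction k with
    | zero => simpa using hk
    | succ k ih =>
      apply ih
      apply hACM.2
      rw [y0B, ← map_mul, ← mul_assoc, ← pow_succ']
      exact hk
  obtain ⟨A, hA, hGA⟩ := exists_cofactor hG hmem
  have hev : ∀ q ∈ 𝕏, evalB K q G = q.1 0 * evalB K q A := by
    intro q hq
    have := evalB_of_mem hGA q hq
    simp only [evalB, map_sub, map_mul, eval_X, Sum.elim_inl] at this ⊢
    exact sub_eq_zero.mp this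
  refine ⟨A, hA, ?_, ?_⟩
  · intro h0
    apply hs.1
    rw [hev p hp, h0, mul_zero]
  · intro q hq hqp
    have := hev q hq
    rw [hs.2 q hq hqp] at this
    exact (mul_eq_zero.mp this.symm).resolve_left (x0_ne h hACM hq)

lemma y0_ne {K : Type} [Field K] [DecidableEq K] {m n : ℕ} {𝕏 : Finset (BiPt K m n)}
    (h : GoodConfig K 𝕏) (hACM : ACMxy K 𝕏) {p : BiPt K m n} (hp : p ∈ 𝕏) : p.2 0 ≠ 0 := by
  intro h0
  have hstep : ∀ c e : ℤ, (c, e) ∈ sepDegsB K 𝕏 p → (c - 1, e) ∈ sepDegsB K 𝕏 p := by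
    rintro c e ⟨F, hF, hs⟩
    refine descend h hACM hp hF hs 1 ?_
    have hmem : X (Sum.inr 0) ^ 1 * F ∈ vIdealB K 𝕏 := by
      rw [pow_one]
      refine Ideal.subset_span
        ⟨⟨_, (isWeightedHomogeneous_X K (biwt m n) (Sum.inr 0)).mul hF⟩, ?_⟩
      intro r hr
      by_cases hrq : r = p
      · subst hrq
        simp [evalB, h0]
      · have := hs.2 r hr hrq
        simp only [evalB] at this ⊢
        rw [map_mul, this, mul_zero]
    rw [Ideal.Quotient.eq_zero_iff_mem.mpr hmem]
    exact Ideal.zero_mem _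
  have hall : ∀ (k : ℕ) (c e : ℤ), (c, e) ∈ sepDegsB K 𝕏 p → (c - k, e) ∈ sepDegsB K 𝕏 p := by
    intro k
    induction k with
    | zero => intro c e hc; simpa using hc
    | succ k ih =>
      intro c e hc
      have := hstep _ _ (ih c e hc)
      rw [show c - ((k + 1 : ℕ) : ℤ) = c - k - 1 by push_cast; ring]
      exact this
  obtain ⟨F, hF, hs⟩ := hall (deg1 K (𝕏.image Prod.fst) p.1 + 1) _ _ (sepDegs_deg1 h hp)
  have : F = 0 := bihom_neg hF (by push_cast; simp)
  apply hs.1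
  rw [this]
  simp [evalB]

/-- Two separator degrees: the first coordinate of the second can be lowered. -/
lemma step {K : Type} [Field K] [DecidableEq K] {m n : ℕ} {𝕏 : Finset (BiPt K m n)}
    (h : GoodConfig K 𝕏) (hACM : ACMxy K 𝕏) {p : BiPt K m n} (hp : p ∈ 𝕏)
    {a b c e : ℤ} (hF : (a, b) ∈ sepDegsB K 𝕏 p) (hG : (c, e) ∈ sepDegsB K 𝕏 p) (hac : a < c) :
    (c - 1, e) ∈ sepDegsB K 𝕏 p := by
  obtain ⟨F, hF, hFs⟩ := hF
  obtain ⟨G, hG, hGs⟩ := hG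
  obtain ⟨i, hi⟩ : ∃ i : ℕ, c = a + (i + 1) := ⟨(c - a - 1).toNat, by omega⟩
  obtain ⟨j, k, hjk⟩ : ∃ j k : ℕ, b + j = e + k := ⟨(e - b).toNat, (b - e).toNat, by omega⟩
  refine descend h hACM hp hG hGs k ?_
  have hx := x0_ne h hACM hp
  have hy := y0_ne h hACM hp
  set u : K := p.2 0 ^ k * evalB K p G with hu
  set v : K := p.1 0 ^ (i + 1) * p.2 0 ^ j * evalB K p F with hv
  have hv0 : v ≠ 0 := mul_ne_zero (mul_ne_zero (pow_ne_zero _ hx) (pow_ne_zero _ hy)) hFs.1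
  have hmem : X (Sum.inr 0) ^ k * G
      - C (u / v) * (X (Sum.inl 0) ^ (i + 1) * X (Sum.inr 0) ^ j * F) ∈ vIdealB K 𝕏 := by
    refine Ideal.subset_span ⟨⟨(c, e + k), ?_⟩, ?_⟩
    · have h1 := ((isWeightedHomogeneous_X K (biwt m n) (Sum.inr 0)).pow k).mul hG
      have h2 := ((((isWeightedHomogeneous_X K (biwt m n) (Sum.inl 0)).pow (i + 1)).mul
        ((isWeightedHomogeneous_X K (biwt m n) (Sum.inr 0)).pow j)).mul hF).C_mul (u / v)
      have e1 : k • biwt m n (Sum.inr 0) + (c, e) = (c, e + k) := by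
        ext <;> simp [biwt, add_comm]
      have e2 : (i + 1) • biwt m n (Sum.inl 0) + j • biwt m n (Sum.inr 0) + (a, b)
          = (c, e + k) := by
        ext
        · simp [biwt]; omega
        · simp [biwt]; omega
      rw [e1] at h1
      rw [e2] at h2
      exact h1.sub h2
    · intro q hq
      have hev : evalB K q (X (Sum.inr 0) ^ k * G
          - C (u / v) * (X (Sum.inl 0) ^ (i + 1) * X (Sum.inr 0) ^ j * F))
          = q.2 0 ^ k * evalB K q G
            - u / v * (q.1 0 ^ (i + 1) * q.2 0 ^ j * evalB K q F) := by
        simp [evalB]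
      rw [hev]
      by_cases hqp : q = p
      · subst hqp
        rw [← hu, ← hv, div_mul_cancel₀ _ hv0, sub_self]
      · rw [hFs.2 q hq hqp, hGs.2 q hq hqp]
        ring
  rw [← Ideal.Quotient.eq] at hmem
  rw [hmem]
  refine Ideal.mem_span_singleton.mpr ⟨Ideal.Quotient.mk _
    (C (u / v) * (X (Sum.inl 0) ^ i * X (Sum.inr 0) ^ j * F)), ?_⟩
  rw [x0B, ← map_mul]
  congr 1
  ring

lemma lower {K : Type} [Field K] [DecidableEq K] {m n : ℕ} {𝕏 : Finset (BiPt K m n)}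
    (h : GoodConfig K 𝕏) (hACM : ACMxy K 𝕏) {p : BiPt K m n} (hp : p ∈ 𝕏)
    {a b e : ℤ} (hF : (a, b) ∈ sepDegsB K 𝕏 p) (i : ℕ) :
    (a + i, e) ∈ sepDegsB K 𝕏 p → (a, e) ∈ sepDegsB K 𝕏 p := by
  induction i with
  | zero => intro hG; simpa using hG
  | succ i ih =>
    intro hG
    apply ih
    have := step h hACM hp hF hG (by push_cast; omega)
    rw [show a + ((i + 1 : ℕ) : ℤ) - 1 = a + i by push_cast; ring] at this
    exact this

end helpers

end MultiProjPoints

open MultiProjPoints in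
/-- Lemma 4.11: for an ACM set `𝕏` of points in
`P^m × P^n` and `q × q' ∈ 𝕏` one has
`deg_𝕏(q × q') ⪯ (deg_{𝕏₁}(q), deg_{𝕏₂}(q')) ⪯ (r_{𝕏₁}, r_{𝕏₂})`. -/
theorem statement_13 (K : Type) [Field K] [CharZero K] [DecidableEq K]
    (m n : ℕ) (𝕏 : Finset (BiPt K m n)) (hgood : GoodConfig K 𝕏)
    (hne : 𝕏.Nonempty) (hACM : ACMxy K 𝕏)
    (p : BiPt K m n) (hp : p ∈ 𝕏) :
    (∀ dd ∈ minSepDegsB K 𝕏 p,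
      dd ≤ ((deg1 K (𝕏.image Prod.fst) p.1 : ℤ),
            (deg1 K (𝕏.image Prod.snd) p.2 : ℤ))) ∧
    deg1 K (𝕏.image Prod.fst) p.1 ≤ regIndex1 K (𝕏.image Prod.fst) ∧
    deg1 K (𝕏.image Prod.snd) p.2 ≤ regIndex1 K (𝕏.image Prod.snd) := by
  refine ⟨?_, deg1_le_regIndex1 _ (goodSet_fst hgood) _ (Finset.mem_image_of_mem _ hp),
    deg1_le_regIndex1 _ (goodSet_snd hgood) _ (Finset.mem_image_of_mem _ hp)⟩
  rintro ⟨a, b⟩ ⟨hs, hmin⟩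
  have hD := sepDegs_deg1 hgood hp
  generalize (deg1 K (𝕏.image Prod.fst) p.1 : ℤ) = c at hD ⊢
  generalize (deg1 K (𝕏.image Prod.snd) p.2 : ℤ) = e at hD ⊢
  have hac : a ≤ c := by
    by_contra hlt
    push Not at hlt
    have hm := lower hgood hACM hp hD (e := b) (a - c).toNat
      (by rwa [show c + ((a - c).toNat : ℤ) = a by omega])
    exact hmin _ hm (Prod.mk_lt_mk.mpr (Or.inl ⟨hlt, le_rfl⟩))
  have hbe : b ≤ e := by
    by_contra hlt
    push Not at hlt
    have hm := lower hgood hACM hp hs (e := e) (c - a).toNat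
      (by rwa [show a + ((c - a).toNat : ℤ) = c by omega])
    exact hmin _ hm (Prod.mk_lt_mk.mpr (Or.inr ⟨le_rfl, hlt⟩))
  exact Prod.mk_le_mk.mpr ⟨hac, hbe⟩
end
end

section
/- Suppose X = X_1 × X_2 ⊆ P^m × P^n with X_1 = {q_1,...,q_{s_1}} and X_2 = {q'_1,...,q'_{s_2}}. Then deg_X(q_k × q'_l) = (deg_{X_1}(q_k), deg_{X_2}(q'_l)) for all k, l, and X has the Cayley-Bacharach property if and only if X_1 and X_2 are Cayley-Bacharach schemes. -/
/- Common setup: finite sets of points in the multiprojective space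
   `P^m x P^n` over a field `K` of characteristic zero, their bihomogeneous
   vanishing ideals, bigraded Hilbert functions, Kähler differents,
   separators, Cayley-Bacharach property and complete intersections. -/

open MvPolynomial

set_option maxHeartbeats 1000000
set_option synthInstance.maxHeartbeats 400000

noncomputable section

namespace MultiProjAux

open MultiProjPoints

theorem finrank_map_eq {K V A B : Type*} [Field K] [AddCommGroup V] [Module K V]
    [AddCommGroup A] [Module K A] [AddCommGroup B] [Module K B]
    (W : Submodule K V) (f : V →ₗ[K] A) (g : V →ₗ[K] B)
    (h : ∀ x ∈ W, f x = 0 ↔ g x = 0) :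
    Module.finrank K (W.map f) = Module.finrank K (W.map g) := by
  have hk : LinearMap.ker (f.domRestrict W) = LinearMap.ker (g.domRestrict W) := by
    ext ⟨x, hx⟩
    simpa using h x hx
  rw [← LinearMap.range_domRestrict W f, ← LinearMap.range_domRestrict W g]
  exact LinearEquiv.finrank_eq
    ((f.domRestrict W).quotKerEquivRange.symm ≪≫ₗ Submodule.quotEquivOfEq _ _ hk ≪≫ₗ
      (g.domRestrict W).quotKerEquivRange)

/-- Kill the coordinate `p`. -/
def kill (K : Type*) [Field K] {ι : Type*} [DecidableEq ι] (p : ι) : (ι → K) →ₗ[K] (ι → K) :=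
  LinearMap.pi fun q => if q = p then 0 else LinearMap.proj q

theorem kill_eq_zero {K : Type*} [Field K] {ι : Type*} [DecidableEq ι] (p : ι) (v : ι → K) :
    kill K p v = 0 ↔ ∀ q, q ≠ p → v q = 0 := by
  rw [funext_iff]
  refine forall_congr' fun q => ?_
  by_cases hq : q = p <;> simp [kill, hq]

open Classical in
theorem finrank_kill {K : Type*} [Field K] {ι : Type*} [Fintype ι] [DecidableEq ι]
    (p : ι) (V : Submodule K (ι → K)) :
    Module.finrank K (V.map (kill K p)) +
      (if ∃ v ∈ V, v p ≠ 0 ∧ ∀ q, q ≠ p → v q = 0 then 1 else 0) = Module.finrank K V := by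
  rw [← LinearMap.finrank_range_add_finrank_ker ((kill K p).domRestrict V),
    LinearMap.range_domRestrict]
  congr 1
  split_ifs with h
  · obtain ⟨v, hv, hp, hq⟩ := h
    symm
    let v' : LinearMap.ker ((kill K p).domRestrict V) :=
      ⟨⟨v, hv⟩, by simpa using (kill_eq_zero p v).2 hq⟩
    have hv' : v' ≠ 0 := by
      intro h0
      apply hp
      have : v = 0 := congrArg
        (fun z : LinearMap.ker ((kill K p).domRestrict V) => ((z : V) : ι → K)) h0
      simp [this]
    refine (finrank_eq_one_iff_of_nonzero' v' hv').2 ?_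
    rintro ⟨⟨u, hu⟩, hku⟩
    have hu0 : ∀ q, q ≠ p → u q = 0 := (kill_eq_zero p u).1 (by simpa using hku)
    refine ⟨u p / v p, ?_⟩
    apply Subtype.ext
    apply Subtype.ext
    funext q
    change u p / v p * v q = u q
    by_cases hqp : q = p
    · subst hqp; field_simp
    · rw [hq q hqp, hu0 q hqp, mul_zero]
  · symm
    rw [Submodule.finrank_eq_zero, eq_bot_iff]
    rintro ⟨u, hu⟩ hku
    have hu0 : ∀ q, q ≠ p → u q = 0 := (kill_eq_zero p u).1 (by simpa using hku)
    by_cases hup : u p = 0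
    · have : u = 0 := by
        funext q
        by_cases hqp : q = p
        · subst hqp; exact hup
        · exact hu0 q hqp
      simp [this]
    · exact absurd ⟨u, hu, hup, hu0⟩ h

theorem finrank_eq_card_iff {K : Type*} [Field K] {ι : Type*} [Fintype ι] [DecidableEq ι]
    (V : Submodule K (ι → K)) :
    Module.finrank K V = Fintype.card ι ↔
      ∀ p, ∃ v ∈ V, v p ≠ 0 ∧ ∀ q, q ≠ p → v q = 0 := by
  constructor
  · intro h p
    have : V = ⊤ := Submodule.eq_top_of_finrank_eq (by simpa using h)
    refine ⟨Pi.single p 1, by simp [this], by simp, fun q hq => by simp [hq]⟩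
  · intro h
    have : V = ⊤ := by
      rw [eq_top_iff, ← (Pi.basisFun K ι).span_eq, Submodule.span_le]
      rintro _ ⟨p, rfl⟩
      obtain ⟨v, hv, hp, hq⟩ := h p
      have : Pi.basisFun K ι p = (v p)⁻¹ • v := by
        funext q
        by_cases hqp : q = p
        · subst hqp; simp [hp]
        · simp [hqp, hq q hqp]
      rw [this]
      exact V.smul_mem _ hv
    rw [this, finrank_top]
    simp

/-- Evaluation at a family of points. -/
def evL {K σ ι : Type*} [Field K] (pts : ι → σ → K) : MvPolynomial σ K →ₗ[K] (ι → K) :=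
  LinearMap.pi fun i => (aeval (pts i)).toLinearMap

theorem evL_apply {K σ ι : Type*} [Field K] (pts : ι → σ → K) (F : MvPolynomial σ K) (i : ι) :
    evL pts F i = eval (pts i) F := by
  simp [evL, aeval_eq_eval]

theorem hom_aeval {K σ τ M M' : Type*} [Field K] [AddCommMonoid M] [AddCommMonoid M']
    (w : σ → M) (w' : τ → M') (h : M →+ M') (φ : σ → MvPolynomial τ K)
    (hφ : ∀ s, IsWeightedHomogeneous w' (φ s) (h (w s)))
    {F : MvPolynomial σ K} {d : M} (hF : IsWeightedHomogeneous w F d) :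
    IsWeightedHomogeneous w' (aeval φ F) (h d) := by
  rw [aeval_def, eval₂_eq]
  apply IsWeightedHomogeneous.sum
  intro e he
  have hd : Finsupp.weight w e = d := hF (mem_support_iff.1 he)
  rw [algebraMap_eq]
  apply IsWeightedHomogeneous.C_mul
  have : h d = ∑ s ∈ e.support, e s • h (w s) := by
    rw [← hd, Finsupp.weight_apply, Finsupp.sum, map_sum]
    simp
  rw [this]
  exact IsWeightedHomogeneous.prod _ _ _ fun s _ => (hφ s).pow _

theorem mem_vIdealB {K : Type} [Field K] {m n : ℕ} (X : Finset (BiPt K m n)) (d : ℤ × ℤ)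
    (F : BiRing K m n) (hF : IsBihom K F d) :
    F ∈ vIdealB K X ↔ ∀ p ∈ X, evalB K p F = 0 := by
  constructor
  · intro h p hp
    have hle : vIdealB K X ≤ RingHom.ker (eval (Sum.elim p.1 p.2) : BiRing K m n →+* K) := by
      refine Ideal.span_le.2 ?_
      rintro G ⟨_, hG⟩
      exact hG p hp
    exact hle h
  · intro h
    exact Ideal.subset_span ⟨⟨d, hF⟩, h⟩

theorem mem_vIdeal1 {K : Type} [Field K] {N : ℕ} (Y : Finset (Fin (N+1) → K)) (d : ℤ)
    (F : PRing K N) (hF : IsHom1 K F d) :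
    F ∈ vIdeal1 K Y ↔ ∀ p ∈ Y, eval p F = 0 := by
  constructor
  · intro h p hp
    have hle : vIdeal1 K Y ≤ RingHom.ker (eval p : PRing K N →+* K) := by
      refine Ideal.span_le.2 ?_
      rintro G ⟨_, hG⟩
      exact hG p hp
    exact hle h
  · intro h
    exact Ideal.subset_span ⟨⟨d, hF⟩, h⟩

/-- Evaluations at `X` of bihomogeneous forms of degree `d`. -/
def VB {K : Type} [Field K] {m n : ℕ} (X : Finset (BiPt K m n)) (d : ℤ × ℤ) :
    Submodule K (X → K) :=
  (weightedHomogeneousSubmodule K (biwt m n) d).map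
    (evL fun p : X => Sum.elim p.1.1 p.1.2)

open Classical in
theorem HFB_erase {K : Type} [Field K] [DecidableEq K] {m n : ℕ} (X : Finset (BiPt K m n))
    (p : BiPt K m n) (hp : p ∈ X) (d : ℤ × ℤ) :
    HFB K (X.erase p) d + (if d ∈ sepDegsB K X p then 1 else 0) =
      Module.finrank K (VB X d) := by
  rw [← finrank_kill (⟨p, hp⟩ : X) (VB X d)]
  congr 1
  · unfold HFB HFI degPieceB VB
    rw [← Submodule.map_comp]
    apply finrank_map_eq
    intro F hF
    have h1 : (Ideal.Quotient.mkₐ K (vIdealB K (X.erase p))).toLinearMap F = 0 ↔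
        F ∈ vIdealB K (X.erase p) := Ideal.Quotient.eq_zero_iff_mem
    rw [h1, mem_vIdealB _ d F hF, LinearMap.comp_apply, kill_eq_zero]
    constructor
    · rintro h ⟨q, hq⟩ hqp
      rw [evL_apply]
      exact h q (Finset.mem_erase.2 ⟨fun h => hqp (Subtype.ext h), hq⟩)
    · intro h q hq
      have := h ⟨q, Finset.mem_of_mem_erase hq⟩
        (fun h => Finset.ne_of_mem_erase hq (congrArg Subtype.val h))
      rwa [evL_apply] at this
  · refine if_congr ?_ rfl rfl
    constructor
    · rintro ⟨F, hF, hFp, hFq⟩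
      refine ⟨_, ⟨F, hF, rfl⟩, ?_, ?_⟩
      · rw [evL_apply]; exact hFp
      · rintro ⟨q, hq⟩ hqp
        rw [evL_apply]
        exact hFq q hq (fun h => hqp (Subtype.ext h))
    · rintro ⟨_, ⟨F, hF, rfl⟩, h1, h2⟩
      refine ⟨F, hF, ?_, ?_⟩
      · rw [evL_apply] at h1; exact h1
      · intro q hq hqp
        have := h2 ⟨q, hq⟩ (fun h => hqp (congrArg Subtype.val h))
        rwa [evL_apply] at this

theorem hasCB_iff {K : Type} [Field K] [DecidableEq K] {m n : ℕ} (X : Finset (BiPt K m n)) :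
    HasCB K X ↔ ∀ p ∈ X, ∀ q ∈ X, sepDegsB K X p = sepDegsB K X q := by
  classical
  refine forall₂_congr fun p hp => forall₂_congr fun q hq => ?_
  rw [Set.ext_iff]
  refine forall_congr' fun d => ?_
  have h1 := HFB_erase X p hp d
  have h2 := HFB_erase X q hq d
  by_cases a : d ∈ sepDegsB K X p <;> by_cases b : d ∈ sepDegsB K X q <;>
    simp only [a, b, if_true, if_false, iff_true, iff_false, not_true_eq_false] at h1 h2 ⊢ <;> omega

/-- degrees of separators in a single projective space -/
def sep1 {K : Type} [Field K] {N : ℕ} (Y : Finset (Fin (N+1) → K)) (q : Fin (N+1) → K) : Set ℕ :=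
  {d : ℕ | ∃ F : PRing K N, IsHom1 K F (d : ℤ) ∧ eval q F ≠ 0 ∧
    ∀ q' ∈ Y, q' ≠ q → eval q' F = 0}

theorem exists_lin {K : Type} [Field K] {N : ℕ} (p q : Fin (N+1) → K)
    (hp : p ≠ 0) (hq : q ≠ 0) (h : ¬ ∃ c : K, c ≠ 0 ∧ p = c • q) :
    ∃ F : PRing K N, IsHom1 K F 1 ∧ eval p F ≠ 0 ∧ eval q F = 0 := by
  obtain ⟨j, hj⟩ := Function.ne_iff.1 hq
  simp only [Pi.zero_apply] at hj
  by_contra hcon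
  push Not at hcon
  have key : ∀ i, q j * p i = q i * p j := by
    intro i
    by_contra hi
    refine hcon (C (q j) * X i - C (q i) * X j) ?_ ?_ ?_
    · exact ((isWeightedHomogeneous_X K (wt1 N) i).C_mul _).sub
        ((isWeightedHomogeneous_X K (wt1 N) j).C_mul _)
    · simpa [sub_eq_zero] using hi
    · simp; ring
  have hpe : p = (p j / q j) • q := by
    funext i
    have := key i
    simp only [Pi.smul_apply, smul_eq_mul]
    field_simp
    linear_combination this
  refine h ⟨p j / q j, ?_, hpe⟩
  intro h0
  apply hp
  rw [hpe, h0, zero_smul]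

theorem sep1_nonempty {K : Type} [Field K] [DecidableEq K] {N : ℕ} (Y : Finset (Fin (N+1) → K))
    (hY : GoodSet K Y) (q : Fin (N+1) → K) (hq : q ∈ Y) : (sep1 Y q).Nonempty := by
  have h : ∀ q' : Fin (N+1) → K, ∃ F : PRing K N, q' ∈ Y.erase q →
      IsHom1 K F 1 ∧ eval q F ≠ 0 ∧ eval q' F = 0 := by
    intro q'
    by_cases hq' : q' ∈ Y.erase q
    · obtain ⟨F, hF⟩ := exists_lin q q' (hY.1 q hq) (hY.1 q' (Finset.mem_of_mem_erase hq'))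
        (fun hc => Finset.ne_of_mem_erase hq'
          (hY.2 q hq q' (Finset.mem_of_mem_erase hq') hc).symm)
      exact ⟨F, fun _ => hF⟩
    · exact ⟨0, fun h => absurd h hq'⟩
  choose F hF using h
  refine ⟨(Y.erase q).card, ∏ q' ∈ Y.erase q, F q', ?_, ?_, ?_⟩
  · have := IsWeightedHomogeneous.prod (w := wt1 N) (Y.erase q) F (fun _ => (1:ℤ))
      (fun i hi => (hF i hi).1)
    simpa [IsHom1] using this
  · rw [map_prod]
    exact Finset.prod_ne_zero_iff.2 fun i hi => (hF i hi).2.1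
  · intro q' hq' hne
    rw [map_prod]
    have hm := Finset.mem_erase.2 ⟨hne, hq'⟩
    exact Finset.prod_eq_zero hm (hF q' hm).2.2

theorem sep1_eq {K : Type} [Field K] [DecidableEq K] {N : ℕ} (Y : Finset (Fin (N+1) → K))
    (hY : GoodSet K Y) (q : Fin (N+1) → K) (hq : q ∈ Y) (d : ℕ) :
    d ∈ sep1 Y q ↔ deg1 K Y q ≤ d := by
  constructor
  · intro h; exact Nat.sInf_le h
  · intro h
    obtain ⟨F, hF, hFq, hF0⟩ : deg1 K Y q ∈ sep1 Y q := Nat.sInf_mem (sep1_nonempty Y hY q hq)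
    obtain ⟨i, hi⟩ := Function.ne_iff.1 (hY.1 q hq)
    simp only [Pi.zero_apply] at hi
    refine ⟨F * X i ^ (d - deg1 K Y q), ?_, ?_, ?_⟩
    · have h2 := (isWeightedHomogeneous_X K (wt1 N) i).pow (d - deg1 K Y q)
      have h3 := IsWeightedHomogeneous.mul hF h2
      have h4 : (d : ℤ) = (deg1 K Y q : ℤ) + (d - deg1 K Y q : ℕ) • wt1 N i := by
        simp only [wt1, nsmul_eq_mul]; omega
      unfold IsHom1
      rw [h4]; exact h3
    · simp [hFq, hi]
    · intro q' hq' hne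
      simp [hF0 q' hq' hne]

theorem HF1_eq_card_iff {K : Type} [Field K] [DecidableEq K] {N : ℕ} (Y : Finset (Fin (N+1) → K))
    (d : ℕ) : HF1 K Y d = Y.card ↔ ∀ q ∈ Y, d ∈ sep1 Y q := by
  have h0 : HF1 K Y d = Module.finrank K ((weightedHomogeneousSubmodule K (wt1 N) (d : ℤ)).map
      (evL fun p : Y => p.1)) := by
    unfold HF1 degPiece1
    apply finrank_map_eq
    intro F hF
    have h1 : (Ideal.Quotient.mkₐ K (vIdeal1 K Y)).toLinearMap F = 0 ↔
        F ∈ vIdeal1 K Y := Ideal.Quotient.eq_zero_iff_mem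
    rw [h1, mem_vIdeal1 _ d F hF, funext_iff]
    simp [evL_apply]
  rw [h0, ← Fintype.card_coe, finrank_eq_card_iff]
  constructor
  · intro h q hq
    obtain ⟨_, ⟨F, hF, rfl⟩, h1, h2⟩ := h ⟨q, hq⟩
    refine ⟨F, hF, ?_, ?_⟩
    · rw [evL_apply] at h1; exact h1
    · intro q' hq' hqp
      have := h2 ⟨q', hq'⟩ (fun h => hqp (congrArg Subtype.val h))
      rwa [evL_apply] at this
  · rintro h ⟨q, hq⟩
    obtain ⟨F, hF, hFp, hFq⟩ := h q hq
    refine ⟨_, ⟨F, hF, rfl⟩, ?_, ?_⟩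
    · rw [evL_apply]; exact hFp
    · rintro ⟨q', hq'⟩ hqp
      rw [evL_apply]
      exact hFq q' hq' (fun h => hqp (Subtype.ext h))

theorem isCB1_iff {K : Type} [Field K] [DecidableEq K] {N : ℕ} (Y : Finset (Fin (N+1) → K))
    (hY : GoodSet K Y) :
    IsCB1 K Y ↔ ∀ p ∈ Y, ∀ q ∈ Y, deg1 K Y p = deg1 K Y q := by
  constructor
  · intro h p hp q hq
    rw [h p hp, h q hq]
  · intro h q hq
    have hs : {r : ℕ | ∀ i : ℕ, r ≤ i → HF1 K Y (i : ℤ) = Y.card} = Set.Ici (deg1 K Y q) := by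
      ext r
      simp only [Set.mem_ofPred_eq, Set.mem_Ici]
      constructor
      · intro hr
        exact (sep1_eq Y hY q hq r).1 ((HF1_eq_card_iff Y r).1 (hr r le_rfl) q hq)
      · intro hr i hi
        refine (HF1_eq_card_iff Y i).2 fun p hp => (sep1_eq Y hY p hp i).2 ?_
        rw [h p hp q hq]
        exact hr.trans hi
    unfold regIndex1
    rw [hs, csInf_Ici]

theorem nonneg_of_hom {K : Type} [Field K] {N : ℕ} (F : PRing K N) (a : ℤ)
    (hF : IsHom1 K F a) (h0 : F ≠ 0) : ∃ k : ℕ, a = k := by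
  obtain ⟨e, he⟩ := exists_coeff_ne_zero h0
  have := hF he
  rw [Finsupp.weight_apply, Finsupp.sum] at this
  refine ⟨∑ i ∈ e.support, e i, ?_⟩
  rw [← this]
  simp [wt1]

theorem sepDegsB_eq {K : Type} [Field K] [DecidableEq K] {m n : ℕ}
    (Y : Finset (Fin (m+1) → K)) (Z : Finset (Fin (n+1) → K))
    (hY : GoodSet K Y) (hZ : GoodSet K Z) (p : BiPt K m n) (h1 : p.1 ∈ Y) (h2 : p.2 ∈ Z) :
    sepDegsB K (Y ×ˢ Z) p = Set.Ici ((deg1 K Y p.1 : ℤ), (deg1 K Z p.2 : ℤ)) := by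
  ext ⟨a, b⟩
  simp only [Set.mem_Ici, Prod.mk_le_mk]
  constructor
  · rintro ⟨F, hF, hFp, hFq⟩
    constructor
    · have hG : IsHom1 K (aeval (Sum.elim X (fun j => C (p.2 j))) F : PRing K m) a := by
        refine hom_aeval (biwt m n) (wt1 m) (AddMonoidHom.fst ℤ ℤ) _ ?_ hF
        rintro (i | j)
        · exact isWeightedHomogeneous_X K (wt1 m) i
        · exact isWeightedHomogeneous_C (wt1 m) _
      have hev : ∀ x, eval x (aeval (Sum.elim X (fun j => C (p.2 j))) F : PRing K m) =
          evalB K (x, p.2) F := by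
        intro x
        rw [aeval_def, algebraMap_eq, eval_eval₂]
        unfold evalB eval
        congr 1
        · ext; simp
        · funext s; rcases s with i | j <;> simp
      have hne : eval p.1 (aeval (Sum.elim X (fun j => C (p.2 j))) F : PRing K m) ≠ 0 := by
        rw [hev]; exact hFp
      obtain ⟨k, rfl⟩ := nonneg_of_hom _ a hG (fun h => hne (by rw [h, map_zero]))
      refine Int.ofNat_le.2 ((sep1_eq Y hY _ h1 k).1 ⟨_, hG, hne, ?_⟩)
      intro q hq hqp
      rw [hev]
      exact hFq _ (Finset.mk_mem_product hq h2) (fun h => hqp (congrArg Prod.fst h))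
    · have hG : IsHom1 K (aeval (Sum.elim (fun j => C (p.1 j)) X) F : PRing K n) b := by
        refine hom_aeval (biwt m n) (wt1 n) (AddMonoidHom.snd ℤ ℤ) _ ?_ hF
        rintro (i | j)
        · exact isWeightedHomogeneous_C (wt1 n) _
        · exact isWeightedHomogeneous_X K (wt1 n) j
      have hev : ∀ x, eval x (aeval (Sum.elim (fun j => C (p.1 j)) X) F : PRing K n) =
          evalB K (p.1, x) F := by
        intro x
        rw [aeval_def, algebraMap_eq, eval_eval₂]
        unfold evalB eval
        congr 1
        · ext; simp
        · funext s; rcases s with i | j <;> simp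
      have hne : eval p.2 (aeval (Sum.elim (fun j => C (p.1 j)) X) F : PRing K n) ≠ 0 := by
        rw [hev]; exact hFp
      obtain ⟨k, rfl⟩ := nonneg_of_hom _ b hG (fun h => hne (by rw [h, map_zero]))
      refine Int.ofNat_le.2 ((sep1_eq Z hZ _ h2 k).1 ⟨_, hG, hne, ?_⟩)
      intro q hq hqp
      rw [hev]
      exact hFq _ (Finset.mk_mem_product h1 hq) (fun h => hqp (congrArg Prod.snd h))
  · rintro ⟨ha, hb⟩
    lift a to ℕ using by omega
    lift b to ℕ using by omega
    obtain ⟨F, hF, hFp, hFq⟩ := (sep1_eq Y hY _ h1 a).2 (Int.ofNat_le.1 ha)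
    obtain ⟨G, hG, hGp, hGq⟩ := (sep1_eq Z hZ _ h2 b).2 (Int.ofNat_le.1 hb)
    have hF' : IsBihom K (aeval (fun i => X (Sum.inl i)) F : BiRing K m n) ((a : ℤ), 0) :=
      hom_aeval (wt1 m) (biwt m n) (AddMonoidHom.inl ℤ ℤ) _
        (fun i => isWeightedHomogeneous_X K (biwt m n) (Sum.inl i)) hF
    have hG' : IsBihom K (aeval (fun i => X (Sum.inr i)) G : BiRing K m n) (0, (b : ℤ)) :=
      hom_aeval (wt1 n) (biwt m n) (AddMonoidHom.inr ℤ ℤ) _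
        (fun i => isWeightedHomogeneous_X K (biwt m n) (Sum.inr i)) hG
    have hev : ∀ x : BiPt K m n, evalB K x ((aeval (fun i => X (Sum.inl i)) F : BiRing K m n) *
        aeval (fun i => X (Sum.inr i)) G) = eval x.1 F * eval x.2 G := by
      intro x
      unfold evalB
      rw [map_mul, aeval_def, aeval_def, algebraMap_eq, eval_eval₂, eval_eval₂]
      unfold eval
      congr 2
      · ext; simp
      · ext; simp
      · ext; simp
      · ext; simp
    refine ⟨aeval (fun i => X (Sum.inl i)) F * aeval (fun i => X (Sum.inr i)) G, ?_, ?_, ?_⟩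
    · have := IsWeightedHomogeneous.mul hF' hG'
      simpa [IsBihom] using this
    · rw [hev]; exact mul_ne_zero hFp hGp
    · rintro ⟨x, y⟩ hxy hne
      rw [hev]
      obtain ⟨hx, hy⟩ := Finset.mem_product.1 hxy
      by_cases hxp : x = p.1
      · have hyp : y ≠ p.2 := fun h => hne (Prod.ext hxp h)
        simp [hGq y hy hyp]
      · simp [hFq x hx hxp]

end MultiProjAux

open MultiProjPoints in
/-- Proposition 4.12: if `𝕏 = 𝕏₁ × 𝕏₂ ⊆ P^m × P^n` then
`deg_𝕏(q_k × q'_l) = (deg_{𝕏₁}(q_k), deg_{𝕏₂}(q'_l))` for all `k, l`, and `𝕏`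
has the Cayley-Bacharach property iff `𝕏₁` and `𝕏₂` are Cayley-Bacharach
schemes. -/
theorem statement_14 (K : Type) [Field K] [CharZero K] [DecidableEq K]
    (m n : ℕ) (𝕏 : Finset (BiPt K m n)) (hgood : GoodConfig K 𝕏)
    (hne : 𝕏.Nonempty)
    (hprod : 𝕏 = (𝕏.image Prod.fst) ×ˢ (𝕏.image Prod.snd)) :
    (∀ p ∈ 𝕏, minSepDegsB K 𝕏 p =
      {((deg1 K (𝕏.image Prod.fst) p.1 : ℤ),
        (deg1 K (𝕏.image Prod.snd) p.2 : ℤ))}) ∧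
    (HasCB K 𝕏 ↔ IsCB1 K (𝕏.image Prod.fst) ∧ IsCB1 K (𝕏.image Prod.snd)) := by
  classical
  have hY : GoodSet K (𝕏.image Prod.fst) := by
    refine ⟨?_, ?_⟩
    · intro q hq
      obtain ⟨p, hp, rfl⟩ := Finset.mem_image.1 hq
      exact (hgood.1 p hp).1
    · intro q hq q' hq' h
      obtain ⟨p, hp, rfl⟩ := Finset.mem_image.1 hq
      obtain ⟨p', hp', rfl⟩ := Finset.mem_image.1 hq'
      exact hgood.2.1 p hp p' hp' h
  have hZ : GoodSet K (𝕏.image Prod.snd) := by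
    refine ⟨?_, ?_⟩
    · intro q hq
      obtain ⟨p, hp, rfl⟩ := Finset.mem_image.1 hq
      exact (hgood.1 p hp).2
    · intro q hq q' hq' h
      obtain ⟨p, hp, rfl⟩ := Finset.mem_image.1 hq
      obtain ⟨p', hp', rfl⟩ := Finset.mem_image.1 hq'
      exact hgood.2.2 p hp p' hp' h
  have key : ∀ p ∈ 𝕏, sepDegsB K 𝕏 p = Set.Ici ((deg1 K (𝕏.image Prod.fst) p.1 : ℤ),
      (deg1 K (𝕏.image Prod.snd) p.2 : ℤ)) := by
    intro p hp
    have := MultiProjAux.sepDegsB_eq _ _ hY hZ p (Finset.mem_image_of_mem _ hp)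
      (Finset.mem_image_of_mem _ hp)
    rwa [← hprod] at this
  refine ⟨?_, ?_⟩
  · intro p hp
    unfold minSepDegsB
    rw [key p hp]
    ext d
    simp only [Set.mem_ofPred_eq, Set.mem_Ici, Set.mem_singleton_iff]
    constructor
    · rintro ⟨h1, h2⟩
      by_contra hne
      exact h2 _ le_rfl (lt_of_le_of_ne h1 (Ne.symm hne))
    · rintro rfl
      exact ⟨le_rfl, fun d' hd' hlt => absurd (lt_of_le_of_lt hd' hlt) (lt_irrefl _)⟩
  · rw [MultiProjAux.hasCB_iff, MultiProjAux.isCB1_iff _ hY, MultiProjAux.isCB1_iff _ hZ]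
    have hmem : ∀ x ∈ 𝕏.image Prod.fst, ∀ y ∈ 𝕏.image Prod.snd, (x, y) ∈ 𝕏 := by
      intro x hx y hy
      rw [hprod]
      exact Finset.mk_mem_product hx hy
    constructor
    · intro h
      obtain ⟨p₀, hp₀⟩ := hne
      have h' : ∀ p ∈ 𝕏, ∀ q ∈ 𝕏,
          deg1 K (𝕏.image Prod.fst) p.1 = deg1 K (𝕏.image Prod.fst) q.1 ∧
          deg1 K (𝕏.image Prod.snd) p.2 = deg1 K (𝕏.image Prod.snd) q.2 := by
        intro p hp q hq
        have := h p hp q hq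
        rw [key p hp, key q hq] at this
        have := Set.Ici_injective this
        simpa using this
      refine ⟨?_, ?_⟩
      · intro x hx y hy
        exact (h' _ (hmem x hx _ (Finset.mem_image_of_mem _ hp₀)) _
          (hmem y hy _ (Finset.mem_image_of_mem _ hp₀))).1
      · intro x hx y hy
        exact (h' _ (hmem _ (Finset.mem_image_of_mem _ hp₀) x hx) _
          (hmem _ (Finset.mem_image_of_mem _ hp₀) y hy)).2
    · rintro ⟨ha, hb⟩ p hp q hq
      rw [key p hp, key q hq,
        ha p.1 (Finset.mem_image_of_mem _ hp) q.1 (Finset.mem_image_of_mem _ hq),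
        hb p.2 (Finset.mem_image_of_mem _ hp) q.2 (Finset.mem_image_of_mem _ hq)]
end
end

section
/- Let X ⊆ P^m × P^n be a finite set of distinct points having the (*)-property. Then for every point q_i × q'_j ∈ X, deg_X(q_i × q'_j) = (deg_{V_j}(q_i), deg_{W_i}(q'_j)). -/
/- Common setup: finite sets of points in the multiprojective space
   `P^m x P^n` over a field `K` of characteristic zero, their bihomogeneous
   vanishing ideals, bigraded Hilbert functions, Kähler differents,
   separators, Cayley-Bacharach property and complete intersections. -/

open MvPolynomial

set_option maxHeartbeats 1000000
set_option synthInstance.maxHeartbeats 400000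

noncomputable section

namespace MultiProjPoints

theorem sep1_exists {K : Type} [Field K] {N : ℕ} (Y : Finset (Fin (N+1) → K))
    (a : Fin (N+1) → K) (ha : a ≠ 0)
    (h0 : ∀ q ∈ Y, q ≠ 0)
    (hY : ∀ q ∈ Y, (∃ c : K, c ≠ 0 ∧ a = c • q) → a = q) :
    ∃ d : ℕ, ∃ F : PRing K N, IsHom1 K F (d : ℤ) ∧ eval a F ≠ 0 ∧
      ∀ q' ∈ Y, q' ≠ a → eval q' F = 0 := by
  classical
  have key : ∀ q : Fin (N+1) → K, ∃ L : PRing K N, q ∈ Y → q ≠ a →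
      IsHom1 K L 1 ∧ eval a L ≠ 0 ∧ eval q L = 0 := by
    intro q
    by_cases hq : q ∈ Y ∧ q ≠ a
    · obtain ⟨hq, hqa⟩ := hq
      have : ∃ i j, q i * a j - q j * a i ≠ 0 := by
        by_contra! hcon
        obtain ⟨i, hi⟩ := Function.ne_iff.mp (h0 q hq)
        simp only [Pi.zero_apply] at hi
        have hac : a = (a i / q i) • q := by
          funext j
          have := hcon i j
          simp only [Pi.smul_apply, smul_eq_mul]
          field_simp
          linear_combination this
        refine hqa (hY q hq ⟨a i / q i, ?_, hac⟩).symm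
        intro hc
        rw [hc, zero_smul] at hac
        exact ha hac
      obtain ⟨i, j, hij⟩ := this
      refine ⟨C (q i) * X j - C (q j) * X i, fun _ _ => ⟨?_, ?_, ?_⟩⟩
      · have h1 : ∀ (c : K) (k : Fin (N+1)),
            IsWeightedHomogeneous (wt1 N) (C c * X k : PRing K N) 1 := by
          intro c k
          have := (isWeightedHomogeneous_C (wt1 N) c).mul
            (isWeightedHomogeneous_X K (wt1 N) k)
          simpa [wt1] using this
        exact (weightedHomogeneousSubmodule K (wt1 N) 1).sub_mem (h1 _ _) (h1 _ _)
      · simpa using hij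
      · simp [mul_comm]
    · exact ⟨0, fun h1 h2 => absurd ⟨h1, h2⟩ hq⟩
  choose L hL using key
  refine ⟨(Y.erase a).card, ∏ q ∈ Y.erase a, L q, ?_, ?_, ?_⟩
  · have := IsWeightedHomogeneous.prod (w := wt1 N) (Y.erase a) L (fun _ => (1 : ℤ))
      (fun q hq => (hL q (Finset.mem_of_mem_erase hq) (Finset.ne_of_mem_erase hq)).1)
    simpa [IsHom1] using this
  · rw [map_prod]
    exact Finset.prod_ne_zero_iff.mpr fun q hq =>
      (hL q (Finset.mem_of_mem_erase hq) (Finset.ne_of_mem_erase hq)).2.1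
  · intro q hq hqa
    rw [map_prod]
    exact Finset.prod_eq_zero (Finset.mem_erase.mpr ⟨hqa, hq⟩) (hL q hq hqa).2.2

theorem weight_biwt {m n : ℕ} (s : (Fin (m+1) ⊕ Fin (n+1)) →₀ ℕ) :
    Finsupp.weight (biwt m n) s =
      (((∑ i, s (Sum.inl i) : ℕ) : ℤ), ((∑ j, s (Sum.inr j) : ℕ) : ℤ)) := by
  rw [Finsupp.weight_apply, Finsupp.sum_fintype _ _ (by simp)]
  ext <;> simp [biwt, Fintype.sum_sum_type, Prod.fst_sum, Prod.snd_sum]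

theorem hom_specL {K : Type} [Field K] {m n : ℕ} (F : BiRing K m n) (e : ℤ × ℤ)
    (hF : IsBihom K F e) (b : Fin (n+1) → K) :
    IsHom1 K (aeval (Sum.elim X (fun j => C (b j)) : _ → PRing K m) F) e.1 := by
  rw [aeval_def, eval₂_eq']
  refine IsWeightedHomogeneous.sum _ _ _ fun s hs => ?_
  have hw := hF (mem_support_iff.mp hs)
  rw [weight_biwt] at hw
  rw [Fintype.prod_sum_type]
  simp only [Sum.elim_inl, Sum.elim_inr, ← C_pow, ← map_prod]
  have h1 : IsWeightedHomogeneous (wt1 m) (∏ i, (X i : PRing K m) ^ s (Sum.inl i)) e.1 := by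
    have := IsWeightedHomogeneous.prod (w := wt1 m) Finset.univ
      (fun i => (X i : PRing K m) ^ s (Sum.inl i)) (fun i => s (Sum.inl i) • (1 : ℤ))
      (fun i _ => (isWeightedHomogeneous_X K (wt1 m) i).pow _)
    rw [← hw]
    simpa using this
  have := (isWeightedHomogeneous_C (wt1 m) (coeff s F)).mul
    (h1.mul (isWeightedHomogeneous_C (wt1 m) (∏ j, b j ^ s (Sum.inr j))))
  simpa [algebraMap_eq] using this

theorem hom_specR {K : Type} [Field K] {m n : ℕ} (F : BiRing K m n) (e : ℤ × ℤ)
    (hF : IsBihom K F e) (a : Fin (m+1) → K) :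
    IsHom1 K (aeval (Sum.elim (fun j => C (a j)) X : _ → PRing K n) F) e.2 := by
  rw [aeval_def, eval₂_eq']
  refine IsWeightedHomogeneous.sum _ _ _ fun s hs => ?_
  have hw := hF (mem_support_iff.mp hs)
  rw [weight_biwt] at hw
  rw [Fintype.prod_sum_type]
  simp only [Sum.elim_inl, Sum.elim_inr, ← C_pow, ← map_prod]
  have h1 : IsWeightedHomogeneous (wt1 n) (∏ i, (X i : PRing K n) ^ s (Sum.inr i)) e.2 := by
    have := IsWeightedHomogeneous.prod (w := wt1 n) Finset.univ
      (fun i => (X i : PRing K n) ^ s (Sum.inr i)) (fun i => s (Sum.inr i) • (1 : ℤ))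
      (fun i _ => (isWeightedHomogeneous_X K (wt1 n) i).pow _)
    rw [← hw]
    simpa using this
  have := (isWeightedHomogeneous_C (wt1 n) (coeff s F)).mul
    ((isWeightedHomogeneous_C (wt1 n) (∏ j, a j ^ s (Sum.inl j))).mul h1)
  simpa [algebraMap_eq] using this

theorem eval_specL {K : Type} [Field K] {m n : ℕ} (F : BiRing K m n)
    (a : Fin (m+1) → K) (b : Fin (n+1) → K) :
    eval a (aeval (Sum.elim X (fun j => C (b j)) : _ → PRing K m) F) = evalB K (a, b) F := by
  unfold evalB
  induction F using MvPolynomial.induction_on with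
  | C c => simp
  | add p q hp hq => rw [map_add, map_add, map_add, hp, hq]
  | mul_X p i hp =>
    rw [map_mul, map_mul, map_mul, hp]
    cases i <;> simp

theorem eval_specR {K : Type} [Field K] {m n : ℕ} (F : BiRing K m n)
    (a : Fin (m+1) → K) (b : Fin (n+1) → K) :
    eval b (aeval (Sum.elim (fun j => C (a j)) X : _ → PRing K n) F) = evalB K (a, b) F := by
  unfold evalB
  induction F using MvPolynomial.induction_on with
  | C c => simp
  | add p q hp hq => rw [map_add, map_add, map_add, hp, hq]
  | mul_X p i hp =>
    rw [map_mul, map_mul, map_mul, hp]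
    cases i <;> simp

theorem hom_renameL {K : Type} [Field K] {m n : ℕ} (F : PRing K m) (d : ℤ)
    (hF : IsHom1 K F d) : IsBihom K (rename Sum.inl F : BiRing K m n) (d, 0) := by
  have hr : (rename Sum.inl F : BiRing K m n) = aeval (fun i => X (Sum.inl i)) F := by
    refine (aeval_X_left_apply (rename Sum.inl F : BiRing K m n)).symm.trans ?_
    rw [aeval_rename]
    rfl
  rw [hr, aeval_def, eval₂_eq']
  refine IsWeightedHomogeneous.sum _ _ _ fun s hs => ?_
  have hw := hF (mem_support_iff.mp hs)
  rw [Finsupp.weight_apply, Finsupp.sum_fintype _ _ (by simp)] at hw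
  have h1 := IsWeightedHomogeneous.prod (w := biwt m n) Finset.univ
      (fun i => (X (Sum.inl i) : BiRing K m n) ^ s i) (fun i => s i • ((1, 0) : ℤ × ℤ))
      (fun i _ => (isWeightedHomogeneous_X K (biwt m n) (Sum.inl i)).pow _)
  have h2 := (isWeightedHomogeneous_C (biwt m n) (coeff s F)).mul h1
  have h3 : (0 : ℤ × ℤ) + ∑ i, s i • ((1, 0) : ℤ × ℤ) = (d, 0) := by
    rw [← hw]; ext <;> simp [wt1, Prod.fst_sum, Prod.snd_sum]
  rw [h3] at h2
  simpa using h2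

theorem hom_renameR {K : Type} [Field K] {m n : ℕ} (F : PRing K n) (d : ℤ)
    (hF : IsHom1 K F d) : IsBihom K (rename Sum.inr F : BiRing K m n) (0, d) := by
  have hr : (rename Sum.inr F : BiRing K m n) = aeval (fun i => X (Sum.inr i)) F := by
    refine (aeval_X_left_apply (rename Sum.inr F : BiRing K m n)).symm.trans ?_
    rw [aeval_rename]
    rfl
  rw [hr, aeval_def, eval₂_eq']
  refine IsWeightedHomogeneous.sum _ _ _ fun s hs => ?_
  have hw := hF (mem_support_iff.mp hs)
  rw [Finsupp.weight_apply, Finsupp.sum_fintype _ _ (by simp)] at hw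
  have h1 := IsWeightedHomogeneous.prod (w := biwt m n) Finset.univ
      (fun i => (X (Sum.inr i) : BiRing K m n) ^ s i) (fun i => s i • ((0, 1) : ℤ × ℤ))
      (fun i _ => (isWeightedHomogeneous_X K (biwt m n) (Sum.inr i)).pow _)
  have h2 := (isWeightedHomogeneous_C (biwt m n) (coeff s F)).mul h1
  have h3 : (0 : ℤ × ℤ) + ∑ i, s i • ((0, 1) : ℤ × ℤ) = (0, d) := by
    rw [← hw]; ext <;> simp [wt1, Prod.fst_sum, Prod.snd_sum]
  rw [h3] at h2
  simpa using h2

theorem hom1_nonneg {K : Type} [Field K] {N : ℕ} (F : PRing K N) (e : ℤ)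
    (hF : IsHom1 K F e) (h0 : F ≠ 0) : 0 ≤ e := by
  obtain ⟨s, hs⟩ := ne_zero_iff.mp h0
  have hw := hF hs
  rw [Finsupp.weight_apply, Finsupp.sum_fintype _ _ (by simp)] at hw
  rw [← hw]
  exact Finset.sum_nonneg fun i _ => by simp [wt1]

theorem deg1_le {K : Type} [Field K] {N : ℕ} (Y : Finset (Fin (N+1) → K))
    (q : Fin (N+1) → K) (F : PRing K N) (e : ℤ) (hF : IsHom1 K F e) (hq : eval q F ≠ 0)
    (hv : ∀ q' ∈ Y, q' ≠ q → eval q' F = 0) : (deg1 K Y q : ℤ) ≤ e := by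
  have he := hom1_nonneg F e hF (by rintro rfl; simp at hq)
  lift e to ℕ using he
  have h : deg1 K Y q ≤ e := Nat.sInf_le ⟨F, hF, hq, hv⟩
  exact_mod_cast h

end MultiProjPoints

open MultiProjPoints in
/-- Proposition 5.1: if `𝕏 ⊆ P^m × P^n` has the
`(⋆)`-property, then for every `q_i × q'_j ∈ 𝕏` one has
`deg_𝕏(q_i × q'_j) = (deg_{V_j}(q_i), deg_{W_i}(q'_j))`. -/
theorem statement_16 (K : Type) [Field K] [CharZero K] [DecidableEq K]
    (m n : ℕ) (𝕏 : Finset (BiPt K m n)) (hgood : GoodConfig K 𝕏)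
    (hne : 𝕏.Nonempty) (hstar : StarProp K 𝕏) :
    ∀ p ∈ 𝕏, minSepDegsB K 𝕏 p =
      {((deg1 K (Vset K 𝕏 p) p.1 : ℤ), (deg1 K (Wset K 𝕏 p) p.2 : ℤ))} := by
  classical
  rintro ⟨a, b⟩ hp
  obtain ⟨hnz, hg1, hg2⟩ := hgood
  have hV : ∀ x, x ∈ Vset K 𝕏 (a, b) ↔ (x, b) ∈ 𝕏 := by
    intro x; simp [Vset]
  have hW : ∀ x, x ∈ Wset K 𝕏 (a, b) ↔ (a, x) ∈ 𝕏 := by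
    intro x; simp [Wset]
  have e1 := sep1_exists (Vset K 𝕏 (a, b)) a (hnz _ hp).1
    (fun q hq => (hnz _ ((hV q).1 hq)).1) (fun q hq h => hg1 _ hp _ ((hV q).1 hq) h)
  have e2 := sep1_exists (Wset K 𝕏 (a, b)) b (hnz _ hp).2
    (fun q hq => (hnz _ ((hW q).1 hq)).2) (fun q hq h => hg2 _ hp _ ((hW q).1 hq) h)
  obtain ⟨F, hF, hFa, hFv⟩ := Nat.sInf_mem e1
  obtain ⟨G, hG, hGa, hGv⟩ := Nat.sInf_mem e2
  change IsHom1 K F (deg1 K (Vset K 𝕏 (a, b)) a : ℤ) at hF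
  change IsHom1 K G (deg1 K (Wset K 𝕏 (a, b)) b : ℤ) at hG
  have hmem : ((deg1 K (Vset K 𝕏 (a, b)) a : ℤ), (deg1 K (Wset K 𝕏 (a, b)) b : ℤ)) ∈
      sepDegsB K 𝕏 (a, b) := by
    have hev : ∀ x y, evalB K (x, y) (rename Sum.inl F * rename Sum.inr G : BiRing K m n)
        = eval x F * eval y G := by
      intro x y
      simp only [evalB, map_mul, eval_rename]
      rfl
    refine ⟨rename Sum.inl F * rename Sum.inr G, ?_, ?_, ?_⟩
    · have := IsWeightedHomogeneous.mul (hom_renameL (n := n) F _ hF)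
        (hom_renameR (m := m) G _ hG)
      simpa [IsBihom] using this
    · rw [hev]; exact mul_ne_zero hFa hGa
    · rintro ⟨x, y⟩ hq hne'
      rw [hev]
      by_cases hx : x = a
      · subst hx
        have hy : y ≠ b := fun h => hne' (by rw [h])
        rw [hGv y ((hW y).2 hq) hy, mul_zero]
      by_cases hy : y = b
      · subst hy
        rw [hFv x ((hV x).2 hq) hx, zero_mul]
      rcases hstar _ hp _ hq with h | h
      · rw [hGv y ((hW y).2 h) hy, mul_zero]
      · rw [hFv x ((hV x).2 h) hx, zero_mul]
  have hle : ∀ e ∈ sepDegsB K 𝕏 (a, b),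
      ((deg1 K (Vset K 𝕏 (a, b)) a : ℤ), (deg1 K (Wset K 𝕏 (a, b)) b : ℤ)) ≤ e := by
    rintro e ⟨H, hH, hHp, hHv⟩
    refine ⟨deg1_le _ _ _ _ (hom_specL H e hH b) ?_ ?_,
      deg1_le _ _ _ _ (hom_specR H e hH a) ?_ ?_⟩
    · rw [eval_specL]; exact hHp
    · intro x hx hxa
      rw [eval_specL]
      exact hHv _ ((hV x).1 hx) (fun h => hxa (congrArg Prod.fst h))
    · rw [eval_specR]; exact hHp
    · intro x hx hxa
      rw [eval_specR]
      exact hHv _ ((hW x).1 hx) (fun h => hxa (congrArg Prod.snd h))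
  ext e
  simp only [Set.mem_singleton_iff]
  constructor
  · rintro ⟨he, hmin⟩
    by_contra hne'
    exact hmin _ hmem (lt_of_le_of_ne (hle e he) (Ne.symm hne'))
  · rintro rfl
    exact ⟨hmem, fun d' hd' hlt => absurd (hle d' hd') (not_le_of_gt hlt)⟩
end
end

section
/- Let X ⊆ P^m × P^n be a finite set of distinct points having the (*)-property. Then X has the Cayley-Bacharach property if and only if: (a) V_1,...,V_{s_2} are Cayley-Bacharach schemes in P^m with r_{V_1} = ... = r_{V_{s_2}}, and (b) W_1,...,W_{s_1} are Cayley-Bacharach schemes in P^n with r_{W_1} = ... = r_{W_{s_1}}. -/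
/- Common setup: finite sets of points in the multiprojective space
   `P^m x P^n` over a field `K` of characteristic zero, their bihomogeneous
   vanishing ideals, bigraded Hilbert functions, Kähler differents,
   separators, Cayley-Bacharach property and complete intersections. -/

open MvPolynomial

set_option maxHeartbeats 1000000
set_option synthInstance.maxHeartbeats 400000

noncomputable section

namespace MPPaux

open MultiProjPoints

/-! ### Generic linear algebra -/

theorem finrank_map_eq {K M N P : Type*} [Field K] [AddCommGroup M] [Module K M]
    [AddCommGroup N] [Module K N] [AddCommGroup P] [Module K P]
    (D : Submodule K M) (f : M →ₗ[K] N) (g : M →ₗ[K] P)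
    (h : ∀ x ∈ D, f x = 0 ↔ g x = 0) :
    Module.finrank K (D.map f) = Module.finrank K (D.map g) := by
  have hk : LinearMap.ker (f.domRestrict D) = LinearMap.ker (g.domRestrict D) := by
    ext x
    simpa using h x x.2
  rw [← LinearMap.range_domRestrict, ← LinearMap.range_domRestrict]
  exact (((f.domRestrict D).quotKerEquivRange.symm.trans
    (Submodule.quotEquivOfEq _ _ hk)).trans (g.domRestrict D).quotKerEquivRange).finrank_eq

/-- Set the coordinate `p` to zero. -/
def killP (K : Type*) [Field K] {ι : Type*} [DecidableEq ι] (p : ι) :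
    (ι → K) →ₗ[K] (ι → K) where
  toFun v := fun q => if q = p then 0 else v q
  map_add' u v := by ext q; by_cases h : q = p <;> simp [h]
  map_smul' c v := by ext q; by_cases h : q = p <;> simp [h]

theorem finrank_kill {K ι : Type*} [Field K] [Fintype ι] [DecidableEq ι]
    (L : Submodule K (ι → K)) (p : ι) (s : Prop) [Decidable s]
    (hs : s ↔ ∃ v ∈ L, v p ≠ 0 ∧ ∀ q, q ≠ p → v q = 0) :
    Module.finrank K (L.map (killP K p)) + (if s then 1 else 0) = Module.finrank K L := by
  have h1 := LinearMap.finrank_range_add_finrank_ker ((killP K p).domRestrict L)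
  rw [LinearMap.range_domRestrict] at h1
  rw [← h1]
  congr 1
  have hker : ∀ x : L, (killP K p).domRestrict L x = 0 ↔ ∀ q, q ≠ p → (x : ι → K) q = 0 := by
    intro x
    rw [LinearMap.domRestrict_apply]
    constructor
    · intro h q hq
      have := congrFun h q
      simpa [killP, hq] using this
    · intro h
      ext q
      by_cases hq : q = p
      · simp [killP, hq]
      · simp [killP, hq, h q hq]
  split_ifs with h
  · obtain ⟨v, hv, hvp, hv0⟩ := hs.1 h
    symm
    refine finrank_eq_one (⟨⟨v, hv⟩, ?_⟩ : LinearMap.ker ((killP K p).domRestrict L)) ?_ ?_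
    · exact (hker ⟨v, hv⟩).2 hv0
    · intro h0
      apply hvp
      have h2 : v = 0 := congrArg
        (fun z : LinearMap.ker ((killP K p).domRestrict L) => ((z : L) : ι → K)) h0
      simp [h2]
    · rintro ⟨w, hw⟩
      refine ⟨(w : ι → K) p / v p, ?_⟩
      apply Subtype.ext
      apply Subtype.ext
      ext q
      have hw' := (hker w).1 hw
      by_cases hq : q = p
      · subst hq
        simp [hvp]
      · simp [hv0 q hq, hw' q hq]
  · symm
    have : LinearMap.ker ((killP K p).domRestrict L) = ⊥ := by
      rw [eq_bot_iff]
      intro w hw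
      have hw' := (hker w).1 hw
      rw [Submodule.mem_bot]
      apply Subtype.ext
      ext q
      by_cases hq : q = p
      · subst hq
        by_contra hne
        exact h (hs.2 ⟨w, w.2, hne, hw'⟩)
      · exact hw' q hq
    rw [this]
    simp

theorem finrank_full {K ι : Type*} [Field K] [Fintype ι] [DecidableEq ι]
    (L : Submodule K (ι → K)) :
    Module.finrank K L = Fintype.card ι ↔
      ∀ p, ∃ v ∈ L, v p ≠ 0 ∧ ∀ q, q ≠ p → v q = 0 := by
  constructor
  · intro h p
    have hL : L = ⊤ := Submodule.eq_top_of_finrank_eq (by simpa using h)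
    refine ⟨Pi.single p 1, by simp [hL], by simp, fun q hq => by simp [hq]⟩
  · intro h
    have hL : L = ⊤ := by
      rw [eq_top_iff]
      intro w _
      rw [← Finset.univ_sum_single w]
      refine Submodule.sum_mem _ fun p _ => ?_
      obtain ⟨v, hv, hvp, hv0⟩ := h p
      have : Pi.single p (w p) = (w p / v p) • v := by
        ext q
        by_cases hq : q = p
        · subst hq
          simp [hvp]
        · simp [hq, hv0 q hq]
      rw [this]
      exact L.smul_mem _ hv
    rw [hL]
    simp

/-! ### Weighted homogeneous polynomials -/

theorem aeval_hom {K σ τ M N : Type*} [Field K] [AddCommMonoid M] [AddCommMonoid N]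
    (w : σ → M) (w' : τ → N) (e : M →+ N) (φ : σ → MvPolynomial τ K)
    (hφ : ∀ i, IsWeightedHomogeneous w' (φ i) (e (w i)))
    {F : MvPolynomial σ K} {d : M} (hF : IsWeightedHomogeneous w F d) :
    IsWeightedHomogeneous w' (aeval φ F) (e d) := by
  rw [aeval_def, eval₂_eq]
  refine IsWeightedHomogeneous.sum _ _ _ fun s hs => ?_
  refine IsWeightedHomogeneous.C_mul ?_ _
  have hd : Finsupp.weight w s = d := hF (mem_support_iff.1 hs)
  rw [← hd, Finsupp.weight_apply, Finsupp.sum, map_sum]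
  refine IsWeightedHomogeneous.prod _ _ _ fun i _ => ?_
  rw [map_nsmul]
  exact (hφ i).pow _

variable (K : Type) [Field K] [CharZero K] [DecidableEq K]

/-! ### One projective space -/

/-- Existence of a separator of degree `i`. -/
def Sep1 {N : ℕ} (Y : Finset (Fin (N+1) → K)) (q : Fin (N+1) → K) (d : ℤ) : Prop :=
  ∃ F : PRing K N, IsHom1 K F d ∧ eval q F ≠ 0 ∧ ∀ q' ∈ Y, q' ≠ q → eval q' F = 0

theorem hom1_nonneg {N : ℕ} {F : PRing K N} {d : ℤ} (h : IsHom1 K F d) (hF : F ≠ 0) :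
    0 ≤ d := by
  obtain ⟨s, hs⟩ := MvPolynomial.ne_zero_iff.1 hF
  have := h hs
  rw [← this, Finsupp.weight_apply, Finsupp.sum]
  refine Finset.sum_nonneg fun i _ => ?_
  simp [wt1]

theorem sep1_nonneg {N : ℕ} {Y : Finset (Fin (N+1) → K)} {q : Fin (N+1) → K} {d : ℤ}
    (h : Sep1 K Y q d) : 0 ≤ d := by
  obtain ⟨F, hF, h1, _⟩ := h
  refine hom1_nonneg K hF ?_
  rintro rfl
  simp at h1

theorem sep1_step {N : ℕ} {Y : Finset (Fin (N+1) → K)} {q : Fin (N+1) → K} (hq : q ≠ 0) {d : ℤ}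
    (h : Sep1 K Y q d) : Sep1 K Y q (d + 1) := by
  obtain ⟨F, hF, h1, h2⟩ := h
  obtain ⟨i, hi⟩ := Function.ne_iff.1 hq
  refine ⟨F * X i, ?_, ?_, ?_⟩
  · exact IsWeightedHomogeneous.mul hF (isWeightedHomogeneous_X K (wt1 N) i)
  · simpa [h1] using hi
  · intro q' hq' hne
    simp [h2 q' hq' hne]

theorem sep1_mono {N : ℕ} {Y : Finset (Fin (N+1) → K)} {q : Fin (N+1) → K} (hq : q ≠ 0) {a b : ℕ}
    (hab : a ≤ b) (h : Sep1 K Y q a) : Sep1 K Y q b := by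
  induction b, hab using Nat.le_induction with
  | base => exact h
  | succ b _ ih =>
    have := sep1_step K hq ih
    exact_mod_cast this

theorem exists_linear {N : ℕ} {q q' : Fin (N+1) → K} (hq : q ≠ 0) (hq' : q' ≠ 0)
    (hne : ¬ ∃ c : K, c ≠ 0 ∧ q = c • q') :
    ∃ l : PRing K N, IsHom1 K l 1 ∧ eval q l ≠ 0 ∧ eval q' l = 0 := by
  obtain ⟨j, hj⟩ := Function.ne_iff.1 hq'
  simp only [Pi.zero_apply] at hj
  have : ∃ i, q i * q' j - q j * q' i ≠ 0 := by
    by_contra! hcon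
    have heq : q = (q j / q' j) • q' := by
      ext i
      have := hcon i
      simp only [Pi.smul_apply, smul_eq_mul]
      field_simp
      linear_combination this
    refine hne ⟨q j / q' j, ?_, heq⟩
    intro h0
    rw [h0, zero_smul] at heq
    exact hq heq
  obtain ⟨i, hi⟩ := this
  refine ⟨C (q' j) * X i - C (q' i) * X j, ?_, ?_, ?_⟩
  · exact IsWeightedHomogeneous.sub
      ((isWeightedHomogeneous_X K (wt1 N) i).C_mul _) ((isWeightedHomogeneous_X K (wt1 N) j).C_mul _)
  · simp only [map_sub, map_mul, eval_C, eval_X]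
    intro h
    apply hi
    linear_combination h
  · simp only [map_sub, map_mul, eval_C, eval_X]
    ring

theorem exists_sep1 {N : ℕ} {Y : Finset (Fin (N+1) → K)} (hY : GoodSet K Y)
    {q : Fin (N+1) → K} (hq : q ∈ Y) : ∃ d : ℕ, Sep1 K Y q d := by
  have key : ∀ q' : Fin (N+1) → K, ∃ l : PRing K N, q' ∈ Y.erase q →
      (IsHom1 K l 1 ∧ eval q l ≠ 0 ∧ eval q' l = 0) := by
    intro q'
    by_cases h : q' ∈ Y.erase q
    · obtain ⟨h1, h2⟩ := Finset.mem_erase.1 h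
      obtain ⟨l, hl⟩ := exists_linear K (hY.1 q hq) (hY.1 q' h2)
        (fun hc => h1 (hY.2 q hq q' h2 hc).symm)
      exact ⟨l, fun _ => hl⟩
    · exact ⟨0, fun h' => absurd h' h⟩
  choose l hl using key
  refine ⟨(Y.erase q).card, ∏ q' ∈ Y.erase q, l q', ?_, ?_, ?_⟩
  · have := IsWeightedHomogeneous.prod (Y.erase q) l (fun _ => (1 : ℤ)) (w := wt1 N)
      (fun q' h => (hl q' h).1)
    simpa [IsHom1] using this
  · rw [map_prod]
    exact Finset.prod_ne_zero_iff.2 fun q' h => (hl q' h).2.1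
  · intro q' h1 h2
    have h : q' ∈ Y.erase q := Finset.mem_erase.2 ⟨h2, h1⟩
    rw [map_prod]
    exact Finset.prod_eq_zero h (hl q' h).2.2

theorem sep1_iff {N : ℕ} {Y : Finset (Fin (N+1) → K)} (hY : GoodSet K Y)
    {q : Fin (N+1) → K} (hq : q ∈ Y) (i : ℕ) : Sep1 K Y q i ↔ deg1 K Y q ≤ i := by
  constructor
  · intro h
    exact Nat.sInf_le h
  · intro h
    have hmem : deg1 K Y q ∈ {d : ℕ | Sep1 K Y q d} := Nat.sInf_mem (exists_sep1 K hY hq)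
    exact sep1_mono K (hY.1 q hq) h hmem

theorem mem_vIdeal1 {N : ℕ} (Y : Finset (Fin (N+1) → K)) {F : PRing K N} {d : ℤ}
    (hF : IsHom1 K F d) : F ∈ vIdeal1 K Y ↔ ∀ q ∈ Y, eval q F = 0 := by
  constructor
  · intro h q hq
    have : vIdeal1 K Y ≤ RingHom.ker (eval q) := by
      refine Ideal.span_le.2 ?_
      rintro G ⟨_, hG⟩
      exact hG q hq
    exact this h
  · intro h
    exact Ideal.subset_span ⟨⟨d, hF⟩, h⟩

/-- Evaluation on a finite set of points. -/
def evY {σ : Type} (Y : Finset (σ → K)) : MvPolynomial σ K →ₗ[K] (Y → K) :=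
  LinearMap.pi fun q => (aeval (q : σ → K)).toLinearMap

theorem HF1_eq {N : ℕ} (Y : Finset (Fin (N+1) → K)) (d : ℤ) :
    HF1 K Y d = Module.finrank K
      ((weightedHomogeneousSubmodule K (wt1 N) d).map (evY K Y)) := by
  unfold HF1 degPiece1
  refine finrank_map_eq _ _ _ fun F hF => ?_
  have h1 := mem_vIdeal1 K Y (F := F) (d := d) hF
  have h2 : (Ideal.Quotient.mkₐ K (vIdeal1 K Y)).toLinearMap F = 0 ↔ F ∈ vIdeal1 K Y := by
    simp [Ideal.Quotient.eq_zero_iff_mem]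
  rw [h2, h1]
  simp [evY, funext_iff, aeval_eq_eval]

theorem HF1_full {N : ℕ} (Y : Finset (Fin (N+1) → K)) (d : ℤ) :
    HF1 K Y d = Y.card ↔ ∀ q ∈ Y, Sep1 K Y q d := by
  rw [HF1_eq, ← Fintype.card_coe, finrank_full]
  rw [Subtype.forall]
  refine forall₂_congr fun q hq => ?_
  constructor
  · rintro ⟨v, ⟨F, hF, rfl⟩, h1, h2⟩
    refine ⟨F, hF, ?_, fun q' hq' hne => ?_⟩
    · simpa [evY, aeval_eq_eval] using h1
    · have := h2 ⟨q', hq'⟩ (by simpa using hne)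
      simpa [evY, aeval_eq_eval] using this
  · rintro ⟨F, hF, h1, h2⟩
    refine ⟨_, ⟨F, hF, rfl⟩, ?_, fun q' hne => ?_⟩
    · simpa [evY, aeval_eq_eval] using h1
    · have := h2 q' q'.2 (fun h => hne (Subtype.ext h))
      simpa [evY, aeval_eq_eval] using this

theorem reg_eq {N : ℕ} {Y : Finset (Fin (N+1) → K)} (hY : GoodSet K Y) (hne : Y.Nonempty) {c : ℕ}
    (hc : ∀ q ∈ Y, deg1 K Y q = c) : regIndex1 K Y = c := by
  have h : {r : ℕ | ∀ i : ℕ, r ≤ i → HF1 K Y (i : ℤ) = Y.card} = Set.Ici c := by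
    ext r
    simp only [Set.mem_ofPred_eq, Set.mem_Ici]
    have h1 : ∀ i : ℕ, HF1 K Y (i : ℤ) = Y.card ↔ c ≤ i := by
      intro i
      rw [HF1_full]
      constructor
      · intro h
        obtain ⟨q, hq⟩ := hne
        rw [← hc q hq]
        exact (sep1_iff K hY hq i).1 (h q hq)
      · intro h q hq
        exact (sep1_iff K hY hq i).2 (by rw [hc q hq]; exact h)
    simp only [h1]
    exact ⟨fun h => h r le_rfl, fun h i hi => h.trans hi⟩
  unfold regIndex1
  rw [h]
  exact csInf_Ici

/-! ### Product of two projective spaces -/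

variable {m n : ℕ}

theorem mem_vIdealB (Y : Finset (BiPt K m n)) {F : BiRing K m n} {d : ℤ × ℤ}
    (hF : IsBihom K F d) : F ∈ vIdealB K Y ↔ ∀ q ∈ Y, evalB K q F = 0 := by
  constructor
  · intro h q hq
    have : vIdealB K Y ≤ RingHom.ker (eval (Sum.elim q.1 q.2)) := by
      refine Ideal.span_le.2 ?_
      rintro G ⟨_, hG⟩
      exact hG q hq
    exact this h
  · intro h
    exact Ideal.subset_span ⟨⟨d, hF⟩, h⟩

/-- Evaluation on a finite set of points of the product. -/
def evB (Y : Finset (BiPt K m n)) : BiRing K m n →ₗ[K] (Y → K) :=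
  LinearMap.pi fun q => (aeval (Sum.elim q.1.1 q.1.2)).toLinearMap

theorem evB_apply (Y : Finset (BiPt K m n)) (F : BiRing K m n) (q : Y) :
    evB K Y F q = evalB K q.1 F := by
  simp [evB, evalB, aeval_eq_eval]

theorem HFB_erase (𝕏 : Finset (BiPt K m n)) (p : 𝕏) (d : ℤ × ℤ) :
    HFB K (𝕏.erase p) d = Module.finrank K
      (((weightedHomogeneousSubmodule K (biwt m n) d).map (evB K 𝕏)).map (killP K p)) := by
  unfold HFB HFI degPieceB
  rw [← Submodule.map_comp]
  refine finrank_map_eq _ _ _ fun F hF => ?_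
  have h1 := mem_vIdealB K (𝕏.erase p) (F := F) (d := d) hF
  have h2 : (Ideal.Quotient.mkₐ K (vIdealB K (𝕏.erase p))).toLinearMap F = 0 ↔
      F ∈ vIdealB K (𝕏.erase p) := by
    simp [Ideal.Quotient.eq_zero_iff_mem]
  rw [h2, h1, funext_iff]
  constructor
  · intro h q
    by_cases hq : q = p
    · simp [killP, hq]
    · have := h q (Finset.mem_erase.2 ⟨fun h => hq (Subtype.ext h), q.2⟩)
      simp [killP, hq, evB_apply, this]
  · intro h q hq
    obtain ⟨h3, h4⟩ := Finset.mem_erase.1 hq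
    have := h ⟨q, h4⟩
    have h5 : (⟨q, h4⟩ : 𝕏) ≠ p := fun h => h3 (congrArg Subtype.val h)
    simpa [killP, h5, evB_apply] using this

open Classical in
theorem HFB_erase_add (𝕏 : Finset (BiPt K m n)) (p : 𝕏) (d : ℤ × ℤ) :
    HFB K (𝕏.erase p) d + (if d ∈ sepDegsB K 𝕏 p then 1 else 0) = Module.finrank K
      ((weightedHomogeneousSubmodule K (biwt m n) d).map (evB K 𝕏)) := by
  rw [HFB_erase]
  convert finrank_kill _ p (d ∈ sepDegsB K 𝕏 p) ?_
  constructor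
  · rintro ⟨F, hF, h1, h2⟩
    refine ⟨_, ⟨F, hF, rfl⟩, ?_, fun q hq => ?_⟩
    · rwa [evB_apply]
    · rw [evB_apply]
      exact h2 q q.2 (fun h => hq (Subtype.ext h))
  · rintro ⟨v, ⟨F, hF, rfl⟩, h1, h2⟩
    refine ⟨F, hF, ?_, fun q hq hne => ?_⟩
    · rwa [evB_apply] at h1
    · have := h2 ⟨q, hq⟩ (fun h => hne (congrArg Subtype.val h))
      rwa [evB_apply] at this

theorem hasCB_iff (𝕏 : Finset (BiPt K m n)) :
    HasCB K 𝕏 ↔ ∀ p ∈ 𝕏, ∀ q ∈ 𝕏, sepDegsB K 𝕏 p = sepDegsB K 𝕏 q := by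
  classical
  unfold HasCB
  refine forall₂_congr fun p hp => forall₂_congr fun q hq => ?_
  rw [Set.ext_iff]
  refine forall_congr' fun d => ?_
  have h1 := HFB_erase_add K 𝕏 ⟨p, hp⟩ d
  have h2 := HFB_erase_add K 𝕏 ⟨q, hq⟩ d
  simp only at h1 h2
  by_cases hA : d ∈ sepDegsB K 𝕏 p <;> by_cases hB : d ∈ sepDegsB K 𝕏 q <;>
    simp only [hA, hB, if_true, if_false] at h1 h2 ⊢ <;> simp <;> omega

theorem mem_V {𝕏 : Finset (BiPt K m n)} {p : BiPt K m n} {x : Fin (m+1) → K} :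
    x ∈ Vset K 𝕏 p ↔ (x, p.2) ∈ 𝕏 := by
  simp only [Vset, Finset.mem_image, Finset.mem_filter]
  constructor
  · rintro ⟨⟨a, b⟩, ⟨h1, h2⟩, h3⟩
    simp only at h2 h3
    subst h2 h3
    exact h1
  · intro h
    exact ⟨_, ⟨h, rfl⟩, rfl⟩

theorem mem_W {𝕏 : Finset (BiPt K m n)} {p : BiPt K m n} {y : Fin (n+1) → K} :
    y ∈ Wset K 𝕏 p ↔ (p.1, y) ∈ 𝕏 := by
  simp only [Wset, Finset.mem_image, Finset.mem_filter]
  constructor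
  · rintro ⟨⟨a, b⟩, ⟨h1, h2⟩, h3⟩
    simp only at h2 h3
    subst h2 h3
    exact h1
  · intro h
    exact ⟨_, ⟨h, rfl⟩, rfl⟩

theorem good_V {𝕏 : Finset (BiPt K m n)} (hg : GoodConfig K 𝕏) (p : BiPt K m n) :
    GoodSet K (Vset K 𝕏 p) := by
  refine ⟨fun q hq => (hg.1 _ ((mem_V K).1 hq)).1, fun q hq q' hq' h => ?_⟩
  exact hg.2.1 _ ((mem_V K).1 hq) _ ((mem_V K).1 hq') h

theorem good_W {𝕏 : Finset (BiPt K m n)} (hg : GoodConfig K 𝕏) (p : BiPt K m n) :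
    GoodSet K (Wset K 𝕏 p) := by
  refine ⟨fun q hq => (hg.1 _ ((mem_W K).1 hq)).2, fun q hq q' hq' h => ?_⟩
  exact hg.2.2 _ ((mem_W K).1 hq) _ ((mem_W K).1 hq') h

theorem sepDegs_iff {𝕏 : Finset (BiPt K m n)} (hstar : StarProp K 𝕏)
    {p : BiPt K m n} (hp : p ∈ 𝕏) (d : ℤ × ℤ) :
    d ∈ sepDegsB K 𝕏 p ↔ Sep1 K (Vset K 𝕏 p) p.1 d.1 ∧ Sep1 K (Wset K 𝕏 p) p.2 d.2 := by
  constructor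
  · rintro ⟨F, hF, h1, h2⟩
    constructor
    · have hev : ∀ x : Fin (m+1) → K,
          eval x (aeval (Sum.elim X (fun j => C (p.2 j)) :
            Fin (m+1) ⊕ Fin (n+1) → PRing K m) F) = evalB K (x, p.2) F := by
        intro x
        unfold evalB
        rw [← aeval_eq_eval, ← aeval_eq_eval]
        simp only
        rw [← AlgHom.comp_apply, comp_aeval]
        congr 2
        ext (i | j) <;> simp
      refine ⟨aeval (Sum.elim X (fun j => C (p.2 j))) F, ?_, ?_, ?_⟩
      · refine aeval_hom (biwt m n) (wt1 m) (AddMonoidHom.fst ℤ ℤ) _ ?_ hF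
        rintro (i | j)
        · exact isWeightedHomogeneous_X K (wt1 m) i
        · exact isWeightedHomogeneous_C (wt1 m) _
      · rw [hev]; exact h1
      · intro x hx hne
        rw [hev]
        exact h2 _ ((mem_V K).1 hx) (fun h => hne (congrArg Prod.fst h))
    · have hev : ∀ y : Fin (n+1) → K,
          eval y (aeval (Sum.elim (fun j => C (p.1 j)) X :
            Fin (m+1) ⊕ Fin (n+1) → PRing K n) F) = evalB K (p.1, y) F := by
        intro x
        unfold evalB
        rw [← aeval_eq_eval, ← aeval_eq_eval]
        simp only
        rw [← AlgHom.comp_apply, comp_aeval]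
        congr 2
        ext (i | j) <;> simp
      refine ⟨aeval (Sum.elim (fun j => C (p.1 j)) X) F, ?_, ?_, ?_⟩
      · refine aeval_hom (biwt m n) (wt1 n) (AddMonoidHom.snd ℤ ℤ) _ ?_ hF
        rintro (i | j)
        · exact isWeightedHomogeneous_C (wt1 n) _
        · exact isWeightedHomogeneous_X K (wt1 n) j
      · rw [hev]; exact h1
      · intro x hx hne
        rw [hev]
        exact h2 _ ((mem_W K).1 hx) (fun h => hne (congrArg Prod.snd h))
  · rintro ⟨⟨f, hf, f1, f2⟩, ⟨g, hg, g1, g2⟩⟩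
    have hev : ∀ q : BiPt K m n, evalB K q
        (rename Sum.inl f * rename Sum.inr g) = eval q.1 f * eval q.2 g := by
      intro q
      simp [evalB, eval_rename, Function.comp_def]
    refine ⟨rename Sum.inl f * rename Sum.inr g, ?_, ?_, ?_⟩
    · have hf' := aeval_hom (wt1 m) (biwt m n) (AddMonoidHom.inl ℤ ℤ)
        (fun i => X (Sum.inl i)) (fun i => isWeightedHomogeneous_X K (biwt m n) (Sum.inl i)) hf
      have hg' := aeval_hom (wt1 n) (biwt m n) (AddMonoidHom.inr ℤ ℤ)
        (fun i => X (Sum.inr i)) (fun i => isWeightedHomogeneous_X K (biwt m n) (Sum.inr i)) hg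
      have := hf'.mul hg'
      have e1 : rename Sum.inl f = aeval (fun i => (X (Sum.inl i) : BiRing K m n)) f := by
        exact AlgHom.congr_fun (algHom_ext (f := rename Sum.inl)
          (g := aeval (fun i => (X (Sum.inl i) : BiRing K m n))) (fun i => by rw [rename_X, aeval_X])) f
      have e2 : rename Sum.inr g = aeval (fun i => (X (Sum.inr i) : BiRing K m n)) g := by
        exact AlgHom.congr_fun (algHom_ext (f := rename Sum.inr)
          (g := aeval (fun i => (X (Sum.inr i) : BiRing K m n))) (fun i => by rw [rename_X, aeval_X])) g
      rw [e1, e2]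
      simpa [IsBihom] using this
    · rw [hev]
      exact mul_ne_zero f1 g1
    · intro q hq hne
      rw [hev]
      by_cases hx : q.1 = p.1
      · have hy : q.2 ≠ p.2 := fun h => hne (Prod.ext hx h)
        rw [g2 q.2 ((mem_W K).2 (by rw [← hx]; exact hq)) hy, mul_zero]
      · by_cases hy : q.2 = p.2
        · rw [f2 q.1 ((mem_V K).2 (by rw [← hy]; exact hq)) hx, zero_mul]
        · rcases hstar p hp q hq with h | h
          · rw [g2 q.2 ((mem_W K).2 h) hy, mul_zero]
          · rw [f2 q.1 ((mem_V K).2 h) hx, zero_mul]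

theorem sepDegs_eq_iff {𝕏 : Finset (BiPt K m n)} (hgood : GoodConfig K 𝕏) (hstar : StarProp K 𝕏)
    {p q : BiPt K m n} (hp : p ∈ 𝕏) (hq : q ∈ 𝕏) :
    sepDegsB K 𝕏 p = sepDegsB K 𝕏 q ↔
      deg1 K (Vset K 𝕏 p) p.1 = deg1 K (Vset K 𝕏 q) q.1 ∧
      deg1 K (Wset K 𝕏 p) p.2 = deg1 K (Wset K 𝕏 q) q.2 := by
  have key : ∀ {p : BiPt K m n}, p ∈ 𝕏 → ∀ a b : ℕ, ((a : ℤ), (b : ℤ)) ∈ sepDegsB K 𝕏 p ↔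
      deg1 K (Vset K 𝕏 p) p.1 ≤ a ∧ deg1 K (Wset K 𝕏 p) p.2 ≤ b := by
    intro p hp a b
    rw [sepDegs_iff K hstar hp, sep1_iff K (good_V K hgood p) ((mem_V K).2 hp),
      sep1_iff K (good_W K hgood p) ((mem_W K).2 hp)]
  constructor
  · intro h
    have h1 := (key hq _ _).1 (h ▸ (key hp _ _).2 ⟨le_rfl, le_rfl⟩)
    have h2 := (key hp _ _).1 (h ▸ (key hq _ _).2 ⟨le_rfl, le_rfl⟩)
    exact ⟨le_antisymm h2.1 h1.1, le_antisymm h2.2 h1.2⟩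
  · rintro ⟨h1, h2⟩
    have aux : ∀ {p : BiPt K m n}, p ∈ 𝕏 → ∀ d ∈ sepDegsB K 𝕏 p,
        ∃ a b : ℕ, d = ((a : ℤ), (b : ℤ)) := by
      intro p hp d hd
      obtain ⟨u, v⟩ := (sepDegs_iff K hstar hp d).1 hd
      obtain ⟨a, ha⟩ := Int.eq_ofNat_of_zero_le (sep1_nonneg K u)
      obtain ⟨b, hb⟩ := Int.eq_ofNat_of_zero_le (sep1_nonneg K v)
      exact ⟨a, b, Prod.ext ha hb⟩
    ext d
    constructor
    · intro hd
      obtain ⟨a, b, rfl⟩ := aux hp d hd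
      rw [key hq, ← h1, ← h2, ← key hp]
      exact hd
    · intro hd
      obtain ⟨a, b, rfl⟩ := aux hq d hd
      rw [key hp, h1, h2, ← key hq]
      exact hd

end MPPaux

open MultiProjPoints in
/-- Theorem 5.2: if `𝕏 ⊆ P^m × P^n` has the
`(⋆)`-property, then `𝕏` has the Cayley-Bacharach property iff all the sets
`V_j` are Cayley-Bacharach schemes in `P^m` with equal regularity indices and
all the sets `W_i` are Cayley-Bacharach schemes in `P^n` with equal
regularity indices. -/
theorem statement_17 (K : Type) [Field K] [CharZero K] [DecidableEq K]
    (m n : ℕ) (𝕏 : Finset (BiPt K m n)) (hgood : GoodConfig K 𝕏)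
    (hne : 𝕏.Nonempty) (hstar : StarProp K 𝕏) :
    HasCB K 𝕏 ↔
      ((∀ p ∈ 𝕏, IsCB1 K (Vset K 𝕏 p)) ∧
        (∀ p ∈ 𝕏, ∀ q ∈ 𝕏, regIndex1 K (Vset K 𝕏 p) = regIndex1 K (Vset K 𝕏 q)) ∧
        (∀ p ∈ 𝕏, IsCB1 K (Wset K 𝕏 p)) ∧
        (∀ p ∈ 𝕏, ∀ q ∈ 𝕏, regIndex1 K (Wset K 𝕏 p) = regIndex1 K (Wset K 𝕏 q))) := by
  rw [MPPaux.hasCB_iff]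
  have hV : ∀ p : BiPt K m n, ∀ x, Vset K 𝕏 (x, p.2) = Vset K 𝕏 p := fun _ _ => rfl
  have hW : ∀ p : BiPt K m n, ∀ y, Wset K 𝕏 (p.1, y) = Wset K 𝕏 p := fun _ _ => rfl
  constructor
  · intro h
    have h' := fun p hp q hq =>
      (MPPaux.sepDegs_eq_iff K hgood hstar (p := p) (q := q) hp hq).1 (h p hp q hq)
    have hVd : ∀ p ∈ 𝕏, ∀ q ∈ 𝕏, ∀ x ∈ Vset K 𝕏 q,
        deg1 K (Vset K 𝕏 q) x = deg1 K (Vset K 𝕏 p) p.1 := by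
      intro p hp q hq x hx
      exact (h' _ ((MPPaux.mem_V K).1 hx) _ hp).1
    have hWd : ∀ p ∈ 𝕏, ∀ q ∈ 𝕏, ∀ x ∈ Wset K 𝕏 q,
        deg1 K (Wset K 𝕏 q) x = deg1 K (Wset K 𝕏 p) p.2 := by
      intro p hp q hq x hx
      exact (h' _ ((MPPaux.mem_W K).1 hx) _ hp).2
    have hVr : ∀ p ∈ 𝕏, ∀ q ∈ 𝕏, regIndex1 K (Vset K 𝕏 q) = deg1 K (Vset K 𝕏 p) p.1 :=
      fun p hp q hq => MPPaux.reg_eq K (MPPaux.good_V K hgood q) ⟨q.1, (MPPaux.mem_V K).2 hq⟩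
        (hVd p hp q hq)
    have hWr : ∀ p ∈ 𝕏, ∀ q ∈ 𝕏, regIndex1 K (Wset K 𝕏 q) = deg1 K (Wset K 𝕏 p) p.2 :=
      fun p hp q hq => MPPaux.reg_eq K (MPPaux.good_W K hgood q) ⟨q.2, (MPPaux.mem_W K).2 hq⟩
        (hWd p hp q hq)
    refine ⟨fun p hp x hx => ?_, fun p hp q hq => ?_, fun p hp x hx => ?_, fun p hp q hq => ?_⟩
    · rw [hVd p hp p hp x hx, hVr p hp p hp]
    · rw [hVr p hp p hp, hVr p hp q hq]
    · rw [hWd p hp p hp x hx, hWr p hp p hp]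
    · rw [hWr p hp p hp, hWr p hp q hq]
  · rintro ⟨h1, h2, h3, h4⟩ p hp q hq
    rw [MPPaux.sepDegs_eq_iff K hgood hstar hp hq]
    rw [h1 p hp _ ((MPPaux.mem_V K).2 hp), h1 q hq _ ((MPPaux.mem_V K).2 hq),
      h3 p hp _ ((MPPaux.mem_W K).2 hp), h3 q hq _ ((MPPaux.mem_W K).2 hq)]
    exact ⟨h2 p hp q hq, h4 p hp q hq⟩
end
end
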